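/- The W_p-optimal stopping topology on 𝒫_p(X̄) is finer than the W_p-information topology; that is, every set open in the W_p-information topology is open in the W_p-optimal stopping topology. -/

import Mathlib

open MeasureTheory ProbabilityTheory ENNReal Filter Topology

noncomputable section

namespace AWPaper

/-! ### Generic constructions -/

variable {α β : Type*}

/-- The set of couplings of two measures. -/
def Cpl [MeasurableSpace α] [MeasurableSpace β] (μ : Measure α) (ν : Measure β) :
    Set (Measure (α × β)) :=
  {π | π.map Prod.fst = μ ∧ π.map Prod.snd = ν}

/-- The `p`-Wasserstein distance (with values in `ℝ≥0∞`) associated to an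
`ℝ≥0∞`-valued distance function `d`. -/
def Wp [MeasurableSpace α] (p : ℝ) (d : α → α → ℝ≥0∞) (μ ν : Measure α) : ℝ≥0∞ :=
  ⨅ π ∈ Cpl μ ν, (∫⁻ z, d z.1 z.2 ^ p ∂π) ^ (1 / p)

/-- The topology generated by the open balls of an `ℝ≥0∞`-valued distance
function.  For a genuine metric this is the metric topology. -/
def ballTop (d : α → α → ℝ≥0∞) : TopologicalSpace α :=
  TopologicalSpace.generateFrom {s | ∃ x ε, 0 < ε ∧ s = {y | d x y < ε}}

/-- The product distance of two `ℝ≥0∞`-valued distances, `ℓ^p`-style. -/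
def prodDist (p : ℝ) (d₁ : α → α → ℝ≥0∞) (d₂ : β → β → ℝ≥0∞) :
    α × β → α × β → ℝ≥0∞ :=
  fun u v => (d₁ u.1 v.1 ^ p + d₂ u.2 v.2 ^ p) ^ (1 / p)

/-- Membership in the `p`-Wasserstein space: a probability measure with finite
`p`-th moment (w.r.t. the distance function `d`). -/
def MemPp [MeasurableSpace α] (p : ℝ) (d : α → α → ℝ≥0∞) (μ : Measure α) : Prop :=
  IsProbabilityMeasure μ ∧ ∃ x₀, ∫⁻ x, d x₀ x ^ p ∂μ ≠ ∞

/-- The weak topology on measures induced by integration of bounded continuous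
functions, for a given topology `τ` on the base space. -/
def weakTop [MeasurableSpace α] (τ : TopologicalSpace α) : TopologicalSpace (Measure α) :=
  TopologicalSpace.induced
    (fun μ => fun f : @BoundedContinuousFunction α ℝ τ _ => ∫ x, f x ∂μ)
    Pi.topologicalSpace

/-- The product topology built from two explicitly given topologies. -/
def prodTop (τ₁ : TopologicalSpace α) (τ₂ : TopologicalSpace β) : TopologicalSpace (α × β) :=
  TopologicalSpace.induced Prod.fst τ₁ ⊓ TopologicalSpace.induced Prod.snd τ₂

/-- An everywhere-defined version of the disintegration kernel: it agrees with
`Measure.condKernel` on finite measures. -/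
def condK [MeasurableSpace α] [MeasurableSpace β] [StandardBorelSpace β] [Nonempty β]
    (ρ : Measure (α × β)) : Kernel α β :=
  letI := Classical.dec (IsFiniteMeasure ρ)
  if h : IsFiniteMeasure ρ then @Measure.condKernel α β _ _ _ _ ρ h else 0

/-- The disintegration map `𝒫(A × B) → 𝒫(A × 𝒫(B))`. -/
def disint [MeasurableSpace α] [MeasurableSpace β] [StandardBorelSpace β] [Nonempty β]
    (μ : Measure (α × β)) : Measure (α × Measure β) :=
  μ.map (fun z => (z.1, condK μ z.1))

/-- The intensity ("und") map `𝒫(A × 𝒫(B)) → 𝒫(A × B)`. -/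
def und [MeasurableSpace α] [MeasurableSpace β] (μ : Measure (α × Measure β)) :
    Measure (α × β) :=
  μ.bind (fun z => (Measure.dirac z.1).prod z.2)

/-! ### Path spaces -/

variable {X : Type*} [MeasurableSpace X]

/-- The path-space distance `ρ̄((x_t),(y_t)) = (∑ ρ(x_t,y_t)^p)^{1/p}`. -/
def pathDist (p : ℝ) (d : X → X → ℝ≥0∞) {N : ℕ} :
    (Fin N → X) → (Fin N → X) → ℝ≥0∞ :=
  fun x y => (∑ t, d (x t) (y t) ^ p) ^ (1 / p)

/-- The first `t` coordinates of a path. -/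
def restr {N : ℕ} (t : ℕ) (h : t ≤ N) (x : Fin N → X) : Fin t → X :=
  fun s => x (Fin.castLE h s)

/-- The last `N - t` coordinates of a path. -/
def tailr {N : ℕ} (t : ℕ) (h : t ≤ N) (x : Fin N → X) : Fin (N - t) → X :=
  fun s => x ⟨t + s.1, by have := s.2; omega⟩

/-- A coupling `π` of two path measures is causal: for every `t` and Borel
`A ⊆ 𝒳^t`, `π((Y_1,…,Y_t) ∈ A | X) = π((Y_1,…,Y_t) ∈ A | X_1,…,X_t)` a.s. -/
def Causal {N : ℕ} (π : Measure ((Fin N → X) × (Fin N → X))) : Prop :=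
  ∀ (t : ℕ) (h : t ≤ N) (A : Set (Fin t → X)), MeasurableSet A →
    (π[fun z => A.indicator (fun _ => (1 : ℝ)) (restr t h z.2) |
        MeasurableSpace.comap Prod.fst inferInstance])
      =ᵐ[π]
    (π[fun z => A.indicator (fun _ => (1 : ℝ)) (restr t h z.2) |
        MeasurableSpace.comap (fun z => restr t h z.1) inferInstance])

/-- Bicausal couplings. -/
def Bicausal {N : ℕ} (π : Measure ((Fin N → X) × (Fin N → X))) : Prop :=
  Causal π ∧ Causal (π.map Prod.swap)

/-- The causal Wasserstein "distance" `CW_p`. -/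
def CW (p : ℝ) (d : X → X → ℝ≥0∞) {N : ℕ} (μ ν : Measure (Fin N → X)) : ℝ≥0∞ :=
  ⨅ π ∈ {π ∈ Cpl μ ν | Causal π}, (∫⁻ z, pathDist p d z.1 z.2 ^ p ∂π) ^ (1 / p)

/-- The symmetrized causal Wasserstein distance `SCW_p`. -/
def SCW (p : ℝ) (d : X → X → ℝ≥0∞) {N : ℕ} (μ ν : Measure (Fin N → X)) : ℝ≥0∞ :=
  max (CW p d μ ν) (CW p d ν μ)

/-- The adapted (nested, bicausal) Wasserstein distance `AW_p`. -/
def AW (p : ℝ) (d : X → X → ℝ≥0∞) {N : ℕ} (μ ν : Measure (Fin N → X)) : ℝ≥0∞ :=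
  ⨅ π ∈ {π ∈ Cpl μ ν | Bicausal π}, (∫⁻ z, pathDist p d z.1 z.2 ^ p ∂π) ^ (1 / p)

/-! ### Nested spaces (Pflug's nested distributions / Vershik's iterated spaces) -/

/-- A measurable space together with an `ℝ≥0∞`-valued distance. -/
structure QMS : Type 1 where
  carrier : Type
  inst : MeasurableSpace carrier
  dist : carrier → carrier → ℝ≥0∞

/-- The nested sequence of spaces: `nest X _ d p 0 = 𝒳` (this is `𝒳_N`), and
`nest X _ d p (k+1) = 𝒳 × 𝒫(nest X _ d p k)` with the nested distance
`D = (ρ^p + 𝒲_p^p)^{1/p}`.  Thus `𝒳_1` (for `N = k+1` time points) is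
`nest X _ d p k`. -/
def nest (X : Type) (mX : MeasurableSpace X) (d : X → X → ℝ≥0∞) (p : ℝ) : ℕ → QMS
  | 0 => ⟨X, mX, d⟩
  | (k + 1) =>
    let Q := nest X mX d p k
    ⟨X × @Measure Q.carrier Q.inst,
      @Prod.instMeasurableSpace _ _ mX (@Measure.instMeasurableSpace _ Q.inst),
      fun a b => (d a.1 b.1 ^ p + (@Wp _ Q.inst p Q.dist a.2 b.2) ^ p) ^ (1 / p)⟩

section NMapSec

variable (Y : Type) [mY : MeasurableSpace Y] [TopologicalSpace Y] [PolishSpace Y]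
  [BorelSpace Y] [Nonempty Y]

/-- The map `𝒩` sending the law of a process with `k+1` time steps to the
corresponding nested distribution, via iterated regular conditional laws. -/
def NMap (d : Y → Y → ℝ≥0∞) (p : ℝ) :
    ∀ k : ℕ, Measure (Fin (k + 1) → Y) →
      @Measure (nest Y mY d p k).carrier (nest Y mY d p k).inst
  | 0, μ =>
    letI : MeasurableSpace (nest Y mY d p 0).carrier := (nest Y mY d p 0).inst
    μ.map (fun x => x 0)
  | (k + 1), μ =>
    letI : MeasurableSpace (nest Y mY d p k).carrier := (nest Y mY d p k).inst
    letI : MeasurableSpace (nest Y mY d p (k + 1)).carrier := (nest Y mY d p (k + 1)).inst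
    (μ.map (fun x => x 0)).map
      (fun x₀ => (x₀, NMap d p k
        ((condK (μ.map (fun x => (x 0, fun s : Fin (k + 1) => x s.succ)))) x₀)))

end NMapSec

section PathStructures

variable {Y : Type*} [mY : MeasurableSpace Y]

/-- A process `L` is adapted: `L t` depends only on the first `t+1` coordinates. -/
def AdaptedProc {N : ℕ} (L : Fin N → (Fin N → Y) → ℝ) : Prop :=
  ∀ (t : Fin N) (x y : Fin N → Y), (∀ s : Fin N, s ≤ t → x s = y s) → L t x = L t y

/-- `τ` is a stopping time of the canonical filtration on the path space. -/
def IsStopTime {N : ℕ} (τ : (Fin N → Y) → Fin N) : Prop :=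
  ∀ t : Fin N,
    MeasurableSet[MeasurableSpace.comap (restr (X := Y) (t.1 + 1) t.2) inferInstance]
      {x | τ x = t}

/-- The optimal stopping value `v^L(μ)`. -/
def stopVal {N : ℕ} (L : Fin N → (Fin N → Y) → ℝ) (μ : Measure (Fin N → Y)) : ℝ :=
  ⨅ τ : {τ : (Fin N → Y) → Fin N // IsStopTime τ}, ∫ x, L (τ.1 x) x ∂μ

variable [TopologicalSpace Y]

/-- `AC(X̄)`: adapted processes which are continuous and bounded. -/
def ACbdd {N : ℕ} (L : Fin N → (Fin N → Y) → ℝ) : Prop :=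
  (∀ t, Continuous (L t)) ∧ AdaptedProc L ∧ ∃ C : ℝ, ∀ t x, |L t x| ≤ C

/-- `AC_p(X̄)`: adapted continuous processes of growth of order `p`. -/
def ACp (p : ℝ) (d : Y → Y → ℝ≥0∞) {N : ℕ} (L : Fin N → (Fin N → Y) → ℝ) : Prop :=
  (∀ t, Continuous (L t)) ∧ AdaptedProc L ∧
    ∃ (C : ℝ) (x₀ : Fin N → Y), ∀ t x, |L t x| ≤ C * (1 + ((pathDist p d x₀ x) ^ p).toReal)

/-- The optimal stopping topology (weak version, bounded continuous rewards). -/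
def stopTopW (N : ℕ) : TopologicalSpace (Measure (Fin N → Y)) :=
  ⨅ L : {L : Fin N → (Fin N → Y) → ℝ // ACbdd L},
    TopologicalSpace.induced (stopVal L.1) inferInstance

/-- The `𝒲_p`-optimal stopping topology. -/
def stopTopWp (p : ℝ) (d : Y → Y → ℝ≥0∞) (N : ℕ) :
    TopologicalSpace (Measure (Fin N → Y)) :=
  ⨅ L : {L : Fin N → (Fin N → Y) → ℝ // ACp p d L},
    TopologicalSpace.induced (stopVal L.1) inferInstance

variable [PolishSpace Y] [BorelSpace Y] [Nonempty Y]

/-- Hellwig's map `I_t`, sending `μ` to the joint law of the first `t`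
coordinates together with the conditional law of the remaining coordinates. -/
def infoMap (N t : ℕ) (h : t ≤ N) (μ : Measure (Fin N → Y)) :
    Measure ((Fin t → Y) × Measure (Fin (N - t) → Y)) :=
  μ.map (fun x => (restr t h x,
    condK (μ.map (fun y => (restr t h y, tailr t h y))) (restr t h x)))

/-- Hellwig's information topology (weak version). -/
def infoTopW (N : ℕ) : TopologicalSpace (Measure (Fin N → Y)) :=
  ⨅ (t : ℕ) (_ : 1 ≤ t) (h : t ≤ N - 1),
    TopologicalSpace.induced (infoMap N t (le_trans h (Nat.sub_le N 1)))
      (weakTop (prodTop Pi.topologicalSpace (weakTop Pi.topologicalSpace)))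

/-- The `𝒲_p`-information topology. -/
def infoTopWp (p : ℝ) (d : Y → Y → ℝ≥0∞) (N : ℕ) :
    TopologicalSpace (Measure (Fin N → Y)) :=
  ⨅ (t : ℕ) (_ : 1 ≤ t) (h : t ≤ N - 1),
    TopologicalSpace.induced (infoMap N t (le_trans h (Nat.sub_le N 1)))
      (ballTop (Wp p (prodDist p (pathDist p d) (Wp p (pathDist p d)))))

/-- Aldous' prediction process `Z_t^μ` (as a function of the path). -/
def predict (N : ℕ) (μ : Measure (Fin N → Y)) (t : ℕ) (h : t ≤ N) :
    (Fin N → Y) → Measure (Fin N → Y) :=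
  fun x => condK (μ.map (fun y => (restr t h y, y))) (restr t h x)

/-- Aldous' map `E`, sending `μ` to the joint law of the path together with its
prediction process. -/
def aldousMap (N : ℕ) (μ : Measure (Fin N → Y)) :
    Measure ((Fin N → Y) × (Fin (N + 1) → Measure (Fin N → Y))) :=
  μ.map (fun x =>
    (x, fun t : Fin (N + 1) => predict N μ t.1 (Nat.lt_succ_iff.mp t.2) x))

/-- Aldous' extended weak topology. -/
def aldousTopW (N : ℕ) : TopologicalSpace (Measure (Fin N → Y)) :=
  TopologicalSpace.induced (aldousMap N)
    (weakTop (prodTop Pi.topologicalSpace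
      (@Pi.topologicalSpace (Fin (N + 1)) (fun _ => Measure (Fin N → Y))
        (fun _ => weakTop Pi.topologicalSpace))))

/-- The extended `𝒲_p`-topology. -/
def aldousTopWp (p : ℝ) (d : Y → Y → ℝ≥0∞) (N : ℕ) :
    TopologicalSpace (Measure (Fin N → Y)) :=
  TopologicalSpace.induced (aldousMap N)
    (ballTop (Wp p (prodDist p (pathDist p d)
      (fun Z Z' : Fin (N + 1) → Measure (Fin N → Y) =>
        (∑ t, Wp p (pathDist p d) (Z t) (Z' t) ^ p) ^ (1 / p)))))

end PathStructures

/-! ### The lifted two-time-point space `𝒳₁ × 𝒫_p(𝒳₂)` -/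

section Lifted

variable {A B : Type*} [MeasurableSpace A] [MeasurableSpace B]

/-- The nested distance on `𝒳₁ × 𝒫_p(𝒳₂)`. -/
def liftDist (p : ℝ) (dA : A → A → ℝ≥0∞) (dB : B → B → ℝ≥0∞) :
    (A × Measure B) → (A × Measure B) → ℝ≥0∞ :=
  fun u v => (dA u.1 v.1 ^ p + Wp p dB u.2 v.2 ^ p) ^ (1 / p)

/-- `η` is a version of the measure-valued conditional expectation
`E_γ[X̂₂ | Y⃗]` (i.e. the barycenter of a regular conditional law of `X̂₂`
given `Y⃗ = (Y₁, Ŷ₂)`). -/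
def IsCondBar (γ : Measure ((A × Measure B) × (A × Measure B)))
    (η : (A × Measure B) × (A × Measure B) → Measure B) : Prop :=
  (∃ g : (A × Measure B) → Measure B, Measurable g ∧ ∀ z, η z = g z.2) ∧
  (∀ z, IsProbabilityMeasure (η z)) ∧
  ∀ S : Set (A × Measure B), MeasurableSet S → ∀ E : Set B, MeasurableSet E →
    ∫⁻ z in {z | z.2 ∈ S}, η z E ∂γ = ∫⁻ z in {z | z.2 ∈ S}, z.1.2 E ∂γ

/-- `AW̄_p`, the `p`-Wasserstein distance on `𝒫_p(𝒳₁ × 𝒫_p(𝒳₂))`. -/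
def AWbar (p : ℝ) (dA : A → A → ℝ≥0∞) (dB : B → B → ℝ≥0∞)
    (μ ν : Measure (A × Measure B)) : ℝ≥0∞ :=
  Wp p (liftDist p dA dB) μ ν

/-- `CW̄_p`, the lifted causal Wasserstein "distance". -/
def CWbar (p : ℝ) (dA : A → A → ℝ≥0∞) (dB : B → B → ℝ≥0∞)
    (μ ν : Measure (A × Measure B)) : ℝ≥0∞ :=
  ⨅ γ ∈ Cpl μ ν, ⨅ η ∈ {η | IsCondBar γ η},
    (∫⁻ z, (dA z.1.1 z.2.1 ^ p + Wp p dB (η z) z.2.2 ^ p) ∂γ) ^ (1 / p)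

/-- `SCW̄_p`, the symmetrization of `CW̄_p`. -/
def SCWbar (p : ℝ) (dA : A → A → ℝ≥0∞) (dB : B → B → ℝ≥0∞)
    (μ ν : Measure (A × Measure B)) : ℝ≥0∞ :=
  max (CWbar p dA dB μ ν) (CWbar p dA dB ν μ)

/-- Membership in `𝒫_p(𝒳₁ × 𝒫_p(𝒳₂))`: a probability measure, concentrated on
`𝒳₁ × 𝒫_p(𝒳₂)`, with finite `p`-th moment for the nested distance. -/
def MemPpLift (p : ℝ) (dA : A → A → ℝ≥0∞) (dB : B → B → ℝ≥0∞)
    (μ : Measure (A × Measure B)) : Prop :=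
  IsProbabilityMeasure μ ∧ (∀ᵐ z ∂μ, MemPp p dB z.2) ∧
    ∃ z₀ : A × Measure B, MemPp p dB z₀.2 ∧ ∫⁻ z, liftDist p dA dB z₀ z ^ p ∂μ ≠ ∞

/-- Two-time-point causality: given a coupling `π` of measures on products
`A₁ × B₁` and `A₂ × B₂`, the conditional law of `Y₁` given `X = (X₁, X₂)`
coincides with the conditional law of `Y₁` given `X₁`. -/
def Causal2 {A₁ B₁ A₂ B₂ : Type*} [MeasurableSpace A₁] [MeasurableSpace B₁]
    [MeasurableSpace A₂] [MeasurableSpace B₂]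
    (π : Measure ((A₁ × B₁) × (A₂ × B₂))) : Prop :=
  ∀ S : Set A₂, MeasurableSet S →
    (π[fun z => S.indicator (fun _ => (1 : ℝ)) z.2.1 |
        MeasurableSpace.comap Prod.fst inferInstance])
      =ᵐ[π]
    (π[fun z => S.indicator (fun _ => (1 : ℝ)) z.2.1 |
        MeasurableSpace.comap (fun z => z.1.1) inferInstance])

/-- The two-time-point causal Wasserstein "distance" on `𝒫_p(𝒳₁ × 𝒳₂)`. -/
def CW2 (p : ℝ) (dA : A → A → ℝ≥0∞) (dB : B → B → ℝ≥0∞)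
    (μ ν : Measure (A × B)) : ℝ≥0∞ :=
  ⨅ π ∈ {π ∈ Cpl μ ν | Causal2 π},
    (∫⁻ z, (dA z.1.1 z.2.1 ^ p + dB z.1.2 z.2.2 ^ p) ∂π) ^ (1 / p)

end Lifted

/-! ### Part 1: an explicit coupling -/

theorem aux_scal1 (a b : ℝ≥0∞) (ha : a ≠ ∞) (hb : b ≠ ∞) : (max a b)⁻¹ * b ≤ 1 := by
  rw [mul_comm, ← div_eq_mul_inv]
  exact ENNReal.div_le_of_le_mul (by rw [one_mul]; exact le_max_right _ _)

theorem aux_scal2 (a b : ℝ≥0∞) (ha : a ≠ ∞) (hb : b ≠ ∞) :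
    (1 - (max a b)⁻¹ * b) * a = a - b := by
  rcases le_total a b with h | h
  · rw [max_eq_right h, tsub_eq_zero_of_le h]
    rcases eq_or_ne b 0 with h0 | h0
    · have : a = 0 := by rw [h0] at h; exact le_antisymm h bot_le
      simp [this]
    · rw [ENNReal.inv_mul_cancel h0 hb]; simp
  · rw [max_eq_left h]
    rcases eq_or_ne a 0 with h0 | h0
    · have : b = 0 := by rw [h0] at h; exact le_antisymm h bot_le
      simp [h0]
    · rw [ENNReal.sub_mul (fun _ _ => ha), one_mul, mul_right_comm,
        ENNReal.inv_mul_cancel h0 ha, one_mul]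

theorem aux_coupling {S : Type*} [MeasurableSpace S] (n : ℕ) (M M' : ℕ → Measure S)
    (M0 M0' : Measure S) [∀ i, IsFiniteMeasure (M i)] [∀ i, IsFiniteMeasure (M' i)]
    [IsFiniteMeasure M0] [IsFiniteMeasure M0']
    (m m' : Measure S) [IsProbabilityMeasure m] [IsProbabilityMeasure m']
    (hm : ∑ i ∈ Finset.range n, M i + M0 = m) (hm' : ∑ i ∈ Finset.range n, M' i + M0' = m')
    (κ : S × S → ℝ≥0∞) (hκ : Measurable κ) (w : S → ℝ≥0∞) (hw : Measurable w)
    (hκw : ∀ x y, κ (x, y) ≤ w x + w y) (ε : ℝ≥0∞) (R : ℕ → ℝ≥0∞)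
    (hε : ∀ i < n, ∫⁻ z, κ z ∂((M i).prod (M' i)) ≤ ε * (M i Set.univ * M' i Set.univ))
    (hR : ∀ i < n, ∫⁻ x, w x ∂(M i) ≤ R i * M i Set.univ)
    (hR' : ∀ i < n, ∫⁻ x, w x ∂(M' i) ≤ R i * M' i Set.univ) :
    ∃ π ∈ Cpl m m', ∫⁻ z, κ z ∂π ≤ ε + ∑ i ∈ Finset.range n,
        R i * ((M i Set.univ - M' i Set.univ) + (M' i Set.univ - M i Set.univ)) +
        (∫⁻ x, w x ∂M0 + ∫⁻ x, w x ∂M0') := by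
  classical
  set a : ℕ → ℝ≥0∞ := fun i => M i Set.univ with ha
  set b : ℕ → ℝ≥0∞ := fun i => M' i Set.univ with hb
  have hat : ∀ i, a i ≠ ∞ := fun i => measure_ne_top _ _
  have hbt : ∀ i, b i ≠ ∞ := fun i => measure_ne_top _ _
  set c : ℕ → ℝ≥0∞ := fun i => (max (a i) (b i))⁻¹ with hc
  have hcb : ∀ i, c i * b i ≤ 1 := fun i => aux_scal1 _ _ (hat i) (hbt i)
  have hca : ∀ i, c i * a i ≤ 1 := fun i => by
    have := aux_scal1 (b i) (a i) (hbt i) (hat i)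
    rwa [max_comm] at this
  have hta : ∀ i, (1 - c i * b i) * a i = a i - b i := fun i => aux_scal2 _ _ (hat i) (hbt i)
  have htb : ∀ i, (1 - c i * a i) * b i = b i - a i := fun i => by
    have := aux_scal2 (b i) (a i) (hbt i) (hat i)
    rwa [max_comm] at this
  set Q : Measure S := ∑ i ∈ Finset.range n, (1 - c i * b i) • M i + M0 with hQ
  set Q' : Measure S := ∑ i ∈ Finset.range n, (1 - c i * a i) • M' i + M0' with hQ'
  have hdec : ∑ i ∈ Finset.range n, (c i * b i) • M i + Q = m := by
    rw [hQ, ← add_assoc, ← Finset.sum_add_distrib, ← hm]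
    congr 1
    refine Finset.sum_congr rfl fun i _ => ?_
    rw [← add_smul, add_tsub_cancel_of_le (hcb i), one_smul]
  have hdec' : ∑ i ∈ Finset.range n, (c i * a i) • M' i + Q' = m' := by
    rw [hQ', ← add_assoc, ← Finset.sum_add_distrib, ← hm']
    congr 1
    refine Finset.sum_congr rfl fun i _ => ?_
    rw [← add_smul, add_tsub_cancel_of_le (hca i), one_smul]
  have hmass : ∑ i ∈ Finset.range n, (c i * b i) * a i + Q Set.univ = 1 := by
    have := congrArg (fun μ : Measure S => μ Set.univ) hdec
    simpa [Measure.finsetSum_apply] using this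
  have hmass' : ∑ i ∈ Finset.range n, (c i * b i) * a i + Q' Set.univ = 1 := by
    have := congrArg (fun μ : Measure S => μ Set.univ) hdec'
    have h2 : ∑ i ∈ Finset.range n, (c i * a i) * b i + Q' Set.univ = 1 := by
      simpa [Measure.finsetSum_apply] using this
    rw [← h2]
    congr 1
    exact Finset.sum_congr rfl fun i _ => by ring
  have hle1 : ∑ i ∈ Finset.range n, (c i * b i) * a i ≤ 1 := hmass ▸ le_self_add
  have hQQ : Q Set.univ = Q' Set.univ := by
    have hne : ∑ i ∈ Finset.range n, (c i * b i) * a i ≠ ∞ := ne_top_of_le_ne_top one_ne_top hle1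
    exact (ENNReal.add_right_inj hne).1 (hmass.trans hmass'.symm)
  have hQle : Q Set.univ ≤ 1 := hmass ▸ le_add_self
  have hQle' : Q' Set.univ ≤ 1 := hmass' ▸ le_add_self
  haveI : IsFiniteMeasure Q := ⟨lt_of_le_of_lt hQle one_lt_top⟩
  haveI : IsFiniteMeasure Q' := ⟨lt_of_le_of_lt hQle' one_lt_top⟩
  set r := Q Set.univ with hr
  have hrQ : (r⁻¹ * r) • Q = Q := by
    rcases eq_or_ne r 0 with h0 | h0
    · have : Q = 0 := Measure.measure_univ_eq_zero.1 h0
      simp [this]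
    · rw [ENNReal.inv_mul_cancel h0 (measure_ne_top _ _), one_smul]
  have hrQ' : (r⁻¹ * r) • Q' = Q' := by
    rcases eq_or_ne r 0 with h0 | h0
    · have : Q' = 0 := Measure.measure_univ_eq_zero.1 (hQQ ▸ h0)
      simp [this]
    · rw [ENNReal.inv_mul_cancel h0 (measure_ne_top _ _), one_smul]
  refine ⟨∑ i ∈ Finset.range n, c i • (M i).prod (M' i) + r⁻¹ • Q.prod Q', ⟨?_, ?_⟩, ?_⟩
  · rw [Measure.map_add _ _ measurable_fst, Measure.map_smul, Measure.map_fst_prod, smul_smul,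
      ← hQQ, hrQ, ← hdec]
    congr 1
    rw [← Measure.mapₗ_apply_of_measurable measurable_fst, map_sum]
    refine Finset.sum_congr rfl fun i _ => ?_
    rw [Measure.mapₗ_apply_of_measurable measurable_fst, Measure.map_smul, Measure.map_fst_prod,
      smul_smul]
  · rw [Measure.map_add _ _ measurable_snd, Measure.map_smul, Measure.map_snd_prod, smul_smul,
      hrQ', ← hdec']
    congr 1
    rw [← Measure.mapₗ_apply_of_measurable measurable_snd, map_sum]
    refine Finset.sum_congr rfl fun i _ => ?_
    rw [Measure.mapₗ_apply_of_measurable measurable_snd, Measure.map_smul, Measure.map_snd_prod,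
      smul_smul]
  · rw [lintegral_add_measure, lintegral_finsetSum_measure, lintegral_smul_measure]
    have h1 : ∑ i ∈ Finset.range n, ∫⁻ z, κ z ∂(c i • (M i).prod (M' i)) ≤ ε := by
      calc _ ≤ ∑ i ∈ Finset.range n, ε * ((c i * b i) * a i) := by
            refine Finset.sum_le_sum fun i hi => ?_
            rw [lintegral_smul_measure, smul_eq_mul]
            calc _ ≤ c i * (ε * (a i * b i)) := by
                  gcongr; exact hε i (Finset.mem_range.1 hi)
              _ = _ := by ring
        _ = ε * ∑ i ∈ Finset.range n, (c i * b i) * a i := by rw [Finset.mul_sum]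
        _ ≤ ε * 1 := by gcongr
        _ = ε := mul_one _
    have hwQ : ∫⁻ x, w x ∂Q ≤ ∑ i ∈ Finset.range n, R i * (a i - b i) + ∫⁻ x, w x ∂M0 := by
      rw [hQ, lintegral_add_measure, lintegral_finsetSum_measure]
      gcongr with i hi
      rw [lintegral_smul_measure, smul_eq_mul, ← hta i]
      calc _ ≤ (1 - c i * b i) * (R i * a i) := by
            gcongr; exact hR i (Finset.mem_range.1 hi)
        _ = _ := by ring
    have hwQ' : ∫⁻ x, w x ∂Q' ≤ ∑ i ∈ Finset.range n, R i * (b i - a i) + ∫⁻ x, w x ∂M0' := by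
      rw [hQ', lintegral_add_measure, lintegral_finsetSum_measure]
      gcongr with i hi
      rw [lintegral_smul_measure, smul_eq_mul, ← htb i]
      calc _ ≤ (1 - c i * a i) * (R i * b i) := by
            gcongr; exact hR' i (Finset.mem_range.1 hi)
        _ = _ := by ring
    have h2 : r⁻¹ • ∫⁻ z, κ z ∂(Q.prod Q') ≤ ∫⁻ x, w x ∂Q + ∫⁻ x, w x ∂Q' := by
      have : ∫⁻ z, κ z ∂(Q.prod Q') ≤ r * (∫⁻ x, w x ∂Q + ∫⁻ x, w x ∂Q') := by
        calc _ ≤ ∫⁻ z : S × S, (w z.1 + w z.2) ∂(Q.prod Q') :=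
              lintegral_mono fun z => hκw z.1 z.2
          _ = ∫⁻ z : S × S, w z.1 ∂(Q.prod Q') + ∫⁻ z : S × S, w z.2 ∂(Q.prod Q') :=
              lintegral_add_left (hw.comp measurable_fst) _
          _ = r * (∫⁻ x, w x ∂Q + ∫⁻ x, w x ∂Q') := by
              rw [← lintegral_map hw measurable_fst, ← lintegral_map hw measurable_snd,
                Measure.map_fst_prod, Measure.map_snd_prod, lintegral_smul_measure,
                lintegral_smul_measure, ← hQQ, smul_eq_mul, smul_eq_mul, mul_add]
      rw [smul_eq_mul]
      calc _ ≤ r⁻¹ * (r * (∫⁻ x, w x ∂Q + ∫⁻ x, w x ∂Q')) := by gcongr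
        _ = (r⁻¹ * r) * _ := by rw [mul_assoc]
        _ ≤ 1 * _ := by gcongr; exact ENNReal.inv_mul_le_one _
        _ = _ := one_mul _
    calc _ ≤ ε + ((∑ i ∈ Finset.range n, R i * (a i - b i) + ∫⁻ x, w x ∂M0) +
          (∑ i ∈ Finset.range n, R i * (b i - a i) + ∫⁻ x, w x ∂M0')) := by
          gcongr; exact h2.trans (add_le_add hwQ hwQ')
      _ = _ := by
          simp only [mul_add, Finset.sum_add_distrib]; ring

/-- Symmetric difference of extended nonnegative reals. -/
def dd (a b : ℝ≥0∞) : ℝ≥0∞ := (a - b) + (b - a)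

theorem exists_coupling {S : Type*} [MeasurableSpace S]
    (m m' : Measure S) [IsProbabilityMeasure m] [IsProbabilityMeasure m']
    (n : ℕ) (φ : ℕ → S → ℝ≥0∞) (φ0 : S → ℝ≥0∞) (hφ : ∀ i, Measurable (φ i))
    (hφ0 : Measurable φ0) (hsum : ∀ x, ∑ i ∈ Finset.range n, φ i x + φ0 x = 1)
    (hφ1 : ∀ i x, φ i x ≤ 1)
    (κ : S × S → ℝ≥0∞) (hκ : Measurable κ) (w : S → ℝ≥0∞) (hw : Measurable w)
    (hκw : ∀ x y, κ (x, y) ≤ w x + w y) (ε : ℝ≥0∞) (R : ℕ → ℝ≥0∞)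
    (hε : ∀ i x y, φ i x ≠ 0 → φ i y ≠ 0 → κ (x, y) ≤ ε)
    (hR : ∀ i x, φ i x ≠ 0 → w x ≤ R i) :
    ∃ π ∈ Cpl m m', ∫⁻ z, κ z ∂π ≤ ε + ∑ i ∈ Finset.range n,
        R i * dd (∫⁻ x, φ i x ∂m) (∫⁻ x, φ i x ∂m') +
        (∫⁻ x, φ0 x * w x ∂m + ∫⁻ x, φ0 x * w x ∂m') := by
  have hφ01 : ∀ x, φ0 x ≤ 1 := fun x => by rw [← hsum x]; exact le_add_self
  have hfin : ∀ (ν : Measure S) [IsProbabilityMeasure ν] (f : S → ℝ≥0∞), (∀ x, f x ≤ 1) →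
      IsFiniteMeasure (ν.withDensity f) := by
    intro ν _ f hf
    refine isFiniteMeasure_withDensity (ne_top_of_le_ne_top one_ne_top ?_)
    calc ∫⁻ x, f x ∂ν ≤ ∫⁻ x, 1 ∂ν := lintegral_mono hf
      _ = 1 := by simp
  have hdec : ∀ (ν : Measure S) [IsProbabilityMeasure ν],
      ∑ i ∈ Finset.range n, ν.withDensity (φ i) + ν.withDensity φ0 = ν := by
    intro ν _
    ext s hs
    rw [Measure.add_apply, Measure.finsetSum_apply, withDensity_apply _ hs]
    simp_rw [withDensity_apply _ hs]
    rw [← lintegral_finsetSum _ (fun i _ => hφ i), ← lintegral_add_right _ hφ0]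
    simp [hsum]
  haveI := fun i => hfin m (φ i) (hφ1 i)
  haveI := fun i => hfin m' (φ i) (hφ1 i)
  haveI := hfin m φ0 hφ01
  haveI := hfin m' φ0 hφ01
  have hwR : ∀ (ν : Measure S) i, ∫⁻ x, w x ∂(ν.withDensity (φ i)) ≤
      R i * (ν.withDensity (φ i)) Set.univ := by
    intro ν i
    rw [lintegral_withDensity_eq_lintegral_mul _ (hφ i) hw, withDensity_apply _ MeasurableSet.univ,
      Measure.restrict_univ, ← lintegral_const_mul _ (hφ i)]
    refine lintegral_mono fun x => ?_
    simp only [Pi.mul_apply]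
    rcases eq_or_ne (φ i x) 0 with h | h
    · simp [h]
    · rw [mul_comm]; gcongr; exact hR i x h
  obtain ⟨π, hπ, hle⟩ := aux_coupling n (fun i => m.withDensity (φ i))
    (fun i => m'.withDensity (φ i)) (m.withDensity φ0) (m'.withDensity φ0) m m' (hdec m) (hdec m')
    κ hκ w hw hκw ε R (fun i _ => by
      rw [lintegral_prod _ hκ.aemeasurable,
        lintegral_withDensity_eq_lintegral_mul _ (hφ i) hκ.lintegral_prod_right']
      rw [withDensity_apply _ MeasurableSet.univ, withDensity_apply _ MeasurableSet.univ,
        Measure.restrict_univ, Measure.restrict_univ, mul_left_comm,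
        ← lintegral_mul_const _ (hφ i)]
      refine lintegral_mono fun x => ?_
      simp only [Pi.mul_apply]
      rcases eq_or_ne (φ i x) 0 with h | h
      · simp [h]
      · gcongr
        rw [lintegral_withDensity_eq_lintegral_mul _ (hφ i) (by fun_prop),
          ← lintegral_const_mul _ (hφ i)]
        refine lintegral_mono fun y => ?_
        simp only [Pi.mul_apply]
        rcases eq_or_ne (φ i y) 0 with h' | h'
        · simp [h']
        · rw [mul_comm]; gcongr; exact hε i x y h h')
    (fun i _ => hwR m i) (fun i _ => hwR m' i)
  refine ⟨π, hπ, hle.trans (le_of_eq ?_)⟩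
  simp only [dd, withDensity_apply _ MeasurableSet.univ, Measure.restrict_univ,
    lintegral_withDensity_eq_lintegral_mul _ hφ0 hw, Pi.mul_apply]

/-! ### Part 2: gluing -/

theorem minkowski_lower {S : Type*} [MeasurableSpace S] (μ : Measure S) (p : ℝ) (hp : 1 ≤ p)
    (f g : S → ℝ≥0∞) (hg : Measurable g) :
    (∫⁻ x, (f x + g x) ^ p ∂μ) ^ (1 / p) ≤
      (∫⁻ x, f x ^ p ∂μ) ^ (1 / p) + (∫⁻ x, g x ^ p ∂μ) ^ (1 / p) := by
  have hp0 : 0 < p := by linarith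
  obtain ⟨h, hh, hle, heq⟩ := exists_measurable_le_lintegral_eq μ (fun x => (f x + g x) ^ p)
  have hf' : Measurable (fun x => h x ^ (1 / p) - g x) := (hh.pow_const _).sub hg
  have key := ENNReal.lintegral_Lp_add_le (μ := μ) hf'.aemeasurable hg.aemeasurable hp
  rw [heq]
  calc (∫⁻ x, h x ∂μ) ^ (1 / p)
      ≤ (∫⁻ x, ((fun x => h x ^ (1 / p) - g x) + g) x ^ p ∂μ) ^ (1 / p) := by
        gcongr with x
        calc h x = (h x ^ (1 / p)) ^ p := by
              rw [← ENNReal.rpow_mul, one_div, inv_mul_cancel₀ hp0.ne', ENNReal.rpow_one]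
          _ ≤ _ := by
              gcongr
              exact le_tsub_add
    _ ≤ _ := key
    _ ≤ _ := by
        gcongr with x
        rw [tsub_le_iff_right]
        calc h x ^ (1 / p) ≤ ((f x + g x) ^ p) ^ (1 / p) := by gcongr; exact hle x
          _ = f x + g x := by
              rw [← ENNReal.rpow_mul, one_div, mul_inv_cancel₀ hp0.ne', ENNReal.rpow_one]

theorem glue {Z₁ Z₂ Z₃ : Type*} [MeasurableSpace Z₁] [MeasurableSpace Z₂] [MeasurableSpace Z₃]
    (p : ℝ) (hp : 1 ≤ p) (π : Measure (Z₁ × Z₂)) [IsProbabilityMeasure π]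
    (k : Kernel Z₂ Z₃) [IsMarkovKernel k]
    (f : Z₁ × Z₂ → ℝ≥0∞) (g : Z₂ × Z₃ → ℝ≥0∞) (hg : Measurable g) (h : Z₁ × Z₃ → ℝ≥0∞)
    (hfg : ∀ z₁ z₂ z₃, h (z₁, z₃) ≤ f (z₁, z₂) + g (z₂, z₃)) :
    ∃ γ ∈ Cpl (π.map Prod.fst) ((π.map Prod.snd ⊗ₘ k).map Prod.snd),
      (∫⁻ z, h z ^ p ∂γ) ^ (1 / p) ≤ (∫⁻ z, f z ^ p ∂π) ^ (1 / p) +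
        (∫⁻ z, g z ^ p ∂(π.map Prod.snd ⊗ₘ k)) ^ (1 / p) := by
  have hp0 : 0 < p := by linarith
  set K : Kernel (Z₁ × Z₂) Z₃ := k.comap Prod.snd measurable_snd with hK
  set Γ : Measure ((Z₁ × Z₂) × Z₃) := π ⊗ₘ K with hΓ
  have hproj : Γ.map (fun z => (z.1.2, z.2)) = π.map Prod.snd ⊗ₘ k := by
    haveI : IsProbabilityMeasure (π.map Prod.snd) :=
      Measure.isProbabilityMeasure_map measurable_snd.aemeasurable
    refine Measure.ext_of_lintegral _ fun F hF => ?_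
    rw [lintegral_map hF (by fun_prop), Measure.lintegral_compProd (by fun_prop),
      Measure.lintegral_compProd hF, lintegral_map (by fun_prop) measurable_snd]
    rfl
  refine ⟨Γ.map (fun z => (z.1.1, z.2)), ⟨?_, ?_⟩, ?_⟩
  · rw [Measure.map_map measurable_fst (by fun_prop)]
    have : (Prod.fst ∘ fun z : (Z₁ × Z₂) × Z₃ => (z.1.1, z.2)) = Prod.fst ∘ Prod.fst := rfl
    rw [this, ← Measure.map_map measurable_fst measurable_fst]
    congr 1
    exact Measure.fst_compProd π K
  · rw [Measure.map_map measurable_snd (by fun_prop), ← hproj,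
      Measure.map_map measurable_snd (by fun_prop)]
    rfl
  · calc _ ≤ (∫⁻ z : (Z₁ × Z₂) × Z₃, (f z.1 + g (z.1.2, z.2)) ^ p ∂Γ) ^ (1 / p) := by
          gcongr
          refine (lintegral_map_le _ _).trans (lintegral_mono fun z => ?_)
          simp only
          gcongr
          exact hfg _ _ _
      _ ≤ (∫⁻ z : (Z₁ × Z₂) × Z₃, (f z.1) ^ p ∂Γ) ^ (1 / p) +
          (∫⁻ z : (Z₁ × Z₂) × Z₃, (g (z.1.2, z.2)) ^ p ∂Γ) ^ (1 / p) :=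
          minkowski_lower Γ p hp (fun z => f z.1) (fun z => g (z.1.2, z.2)) (by fun_prop)
      _ ≤ _ := by
          gcongr
          · obtain ⟨h', hh', hle, heq⟩ := exists_measurable_le_lintegral_eq Γ (fun z => f z.1 ^ p)
            rw [heq, Measure.lintegral_compProd hh']
            refine lintegral_mono fun z => ?_
            calc _ ≤ ∫⁻ _b, f z ^ p ∂(K z) := lintegral_mono fun b => hle (z, b)
              _ = f z ^ p := by simp
          · rw [← hproj, lintegral_map (by fun_prop) (by fun_prop)]

theorem Cpl_isProb_left {Z₁ Z₂ : Type*} [MeasurableSpace Z₁] [MeasurableSpace Z₂]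
    {m₁ : Measure Z₁} {m₂ : Measure Z₂} [IsProbabilityMeasure m₂] {π : Measure (Z₁ × Z₂)}
    (h : π ∈ Cpl m₁ m₂) : IsProbabilityMeasure π := by
  constructor
  have := congrArg (fun m : Measure Z₂ => m Set.univ) h.2
  simpa [Measure.map_apply measurable_snd MeasurableSet.univ] using this

theorem Wp_triangle {B : Type*} [MeasurableSpace B] [StandardBorelSpace B] [Nonempty B]
    (p : ℝ) (hp : 1 ≤ p) (D : B → B → ℝ≥0∞) (hD : Measurable fun z : B × B => D z.1 z.2)
    (htri : ∀ x y z, D x z ≤ D x y + D y z)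
    (m₁ m₂ m₃ : Measure B) [IsProbabilityMeasure m₂] [IsProbabilityMeasure m₃] :
    Wp p D m₁ m₃ ≤ Wp p D m₁ m₂ + Wp p D m₂ m₃ := by
  unfold Wp
  refine ENNReal.le_of_forall_pos_le_add fun ε hε hfin => ?_
  have key : ∀ π ∈ Cpl m₁ m₂, ∀ π' ∈ Cpl m₂ m₃, ∃ γ ∈ Cpl m₁ m₃,
      (∫⁻ z, D z.1 z.2 ^ p ∂γ) ^ (1 / p) ≤ (∫⁻ z, D z.1 z.2 ^ p ∂π) ^ (1 / p) +
        (∫⁻ z, D z.1 z.2 ^ p ∂π') ^ (1 / p) := by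
    intro π hπ π' hπ'
    haveI := Cpl_isProb_left hπ
    haveI := Cpl_isProb_left hπ'
    have h2 : π.map Prod.snd ⊗ₘ π'.condKernel = π' := by
      rw [hπ.2, ← hπ'.1]
      exact π'.disintegrate π'.condKernel
    have := glue p hp π π'.condKernel (fun z => D z.1 z.2) (fun z => D z.1 z.2) hD
      (fun z => D z.1 z.2) (fun x y z => htri x y z)
    rw [h2, hπ.1, hπ'.2] at this
    exact this
  rw [ENNReal.iInf_add, ] 
  refine le_trans ?_ le_self_add
  refine le_iInf fun π => ?_
  rw [ENNReal.iInf_add]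
  refine le_iInf fun hπ => ?_
  rw [ENNReal.add_iInf]
  refine le_iInf fun π' => ?_
  rw [ENNReal.add_iInf]
  refine le_iInf fun hπ' => ?_
  obtain ⟨γ, hγ, hle⟩ := key π hπ π' hπ'
  exact (iInf₂_le γ hγ).trans hle

theorem lp2_add_le (p : ℝ) (hp : 1 ≤ p) (a b c d : ℝ≥0∞) :
    ((a + b) ^ p + (c + d) ^ p) ^ (1 / p) ≤
      (a ^ p + c ^ p) ^ (1 / p) + (b ^ p + d ^ p) ^ (1 / p) := by
  have := ENNReal.Lp_add_le (Finset.univ : Finset (Fin 2)) ![a, c] ![b, d] hp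
  simpa [Fin.sum_univ_two] using this

/-- The outer gluing statement. -/
theorem outer_glue {A B : Type*} [MeasurableSpace A] [StandardBorelSpace A] [Nonempty A]
    [MeasurableSpace B] [StandardBorelSpace B] [Nonempty B]
    (p : ℝ) (hp : 1 ≤ p) (DA : A → A → ℝ≥0∞) (DB : B → B → ℝ≥0∞)
    (hDB : Measurable fun z : B × B => DB z.1 z.2)
    (htA : ∀ x y z, DA x z ≤ DA x y + DA y z) (htB : ∀ x y z, DB x z ≤ DB x y + DB y z)
    (μ ν : Measure A) [IsProbabilityMeasure μ] [IsProbabilityMeasure ν]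
    (k k' : Kernel A B) [IsMarkovKernel k] [IsMarkovKernel k']
    (q : Measure (A × A)) (hq : q ∈ Cpl μ ν)
    (H : (A × Measure B) × A → ℝ≥0∞) (hH : Measurable H)
    (hle : ∀ (z : A × Measure B) a, IsProbabilityMeasure z.2 →
      DA z.1 a ^ p + Wp p DB z.2 (k' a) ^ p ≤ H (z, a))
    (c : Measure (A × Measure B)) :
    Wp p (prodDist p DA (Wp p DB)) c (ν.map fun a => (a, k' a)) ≤
      Wp p (prodDist p DA (Wp p DB)) c (μ.map fun a => (a, k a)) +
        (∫⁻ z, H ((z.1, k z.1), z.2) ∂q) ^ (1 / p) := by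
  classical
  have hp0 : 0 < p := by linarith
  set F : A → A × Measure B := fun a => (a, k a) with hF
  set F' : A → A × Measure B := fun a => (a, k' a) with hF'
  have hFm : Measurable F := measurable_id.prodMk k.measurable
  have hFm' : Measurable F' := measurable_id.prodMk k'.measurable
  haveI : IsProbabilityMeasure q := Cpl_isProb_left hq
  haveI : IsProbabilityMeasure (μ.map F) := Measure.isProbabilityMeasure_map hFm.aemeasurable
  set g : (A × Measure B) × A → ℝ≥0∞ :=
    fun z => if z.1.2 Set.univ = 1 then H z ^ (1 / p) else ∞ with hg
  have hgm : Measurable g := by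
    refine Measurable.ite ?_ (hH.pow_const _) measurable_const
    have : Measurable fun z : (A × Measure B) × A => z.1.2 Set.univ :=
      (Measure.measurable_coe MeasurableSet.univ).comp (by fun_prop)
    exact this (measurableSet_singleton 1)
  have htri : ∀ z₁ z₂ a, prodDist p DA (Wp p DB) z₁ (F' a) ≤
      prodDist p DA (Wp p DB) z₁ z₂ + g (z₂, a) := by
    intro z₁ z₂ a
    by_cases h1 : z₂.2 Set.univ = 1
    · haveI : IsProbabilityMeasure z₂.2 := ⟨h1⟩
      have hgz : g (z₂, a) = H (z₂, a) ^ (1 / p) := by simp [hg, h1]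
      rw [hgz]
      calc _ ≤ ((DA z₁.1 z₂.1 + DA z₂.1 a) ^ p +
            (Wp p DB z₁.2 z₂.2 + Wp p DB z₂.2 (k' a)) ^ p) ^ (1 / p) := by
            unfold prodDist
            gcongr
            · exact htA _ _ _
            · exact Wp_triangle p hp DB hDB htB _ _ _
        _ ≤ _ := lp2_add_le p hp _ _ _ _
        _ ≤ _ := by
            unfold prodDist
            gcongr
            exact hle z₂ a this
    · have hgz : g (z₂, a) = ∞ := by simp [hg, h1]
      rw [hgz]; simp
  have hW : Wp p (prodDist p DA (Wp p DB)) c (μ.map F) =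
      ⨅ π ∈ Cpl c (μ.map F), (∫⁻ z, prodDist p DA (Wp p DB) z.1 z.2 ^ p ∂π) ^ (1 / p) := rfl
  rw [hW, ENNReal.iInf_add]
  refine le_iInf fun π => ?_
  rw [ENNReal.iInf_add]
  refine le_iInf fun hπ => ?_
  haveI := Cpl_isProb_left hπ
  obtain ⟨γ, hγ, hγle⟩ := glue p hp π (q.condKernel.comap Prod.fst measurable_fst)
    (fun z => prodDist p DA (Wp p DB) z.1 z.2) g hgm
    (fun z => prodDist p DA (Wp p DB) z.1 (F' z.2)) htri
  rw [hπ.1, hπ.2] at hγ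
  rw [hπ.2] at hγle
  have hlaw : (μ.map F ⊗ₘ (q.condKernel.comap Prod.fst measurable_fst)) =
      q.map (fun z => (F z.1, z.2)) := by
    refine Measure.ext_of_lintegral _ fun f hf => ?_
    have hqd : q = μ ⊗ₘ q.condKernel := by
      conv_lhs => rw [← q.disintegrate q.condKernel]
      congr 1
      exact hq.1
    rw [lintegral_map hf (by fun_prop), Measure.lintegral_compProd hf]
    conv_rhs => rw [hqd]
    rw [Measure.lintegral_compProd (by fun_prop), lintegral_map (by fun_prop) hFm]
    rfl
  rw [hlaw] at hγ hγle
  have hγ2 : γ.map Prod.snd = ν := by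
    rw [hγ.2, Measure.map_map measurable_snd (by fun_prop), ← hq.2]
    rfl
  have hmem : γ.map (Prod.map id F') ∈ Cpl c (ν.map F') := by
    refine ⟨?_, ?_⟩
    · rw [Measure.map_map measurable_fst (by fun_prop), ← hγ.1]; rfl
    · rw [Measure.map_map measurable_snd (by fun_prop), ← hγ2,
        Measure.map_map hFm' measurable_snd]; rfl
  refine (iInf₂_le (γ.map (Prod.map id F')) hmem).trans ?_
  · calc _ ≤ (∫⁻ z, prodDist p DA (Wp p DB) z.1 (F' z.2) ^ p ∂γ) ^ (1 / p) := by
          gcongr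
          exact lintegral_map_le _ _
      _ ≤ _ := hγle
      _ = _ := by
          congr 2
          rw [lintegral_map (by fun_prop) (by fun_prop)]
          refine lintegral_congr fun z => ?_
          have : g (F z.1, z.2) = H (F z.1, z.2) ^ (1 / p) := by simp [hg, hF]
          rw [this, ← ENNReal.rpow_mul, one_div, inv_mul_cancel₀ hp0.ne', ENNReal.rpow_one]

/-! ### Part 3: partitions of unity -/

theorem exists_bumps {S : Type*} [TopologicalSpace S] [SecondCountableTopology S]
    [CompletelyRegularSpace S] [Nonempty S]
    (κ : S × S → ℝ≥0∞) (hκ : Continuous κ) (hκ0 : ∀ x, κ (x, x) = 0)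
    (w : S → ℝ≥0∞) (hw : Continuous w) (hwt : ∀ x, w x ≠ ∞) (ε : ℝ≥0∞) (hε : 0 < ε) :
    ∃ (u : ℕ → S → ℝ) (R : ℕ → NNReal), (∀ i, Continuous (u i)) ∧
      (∀ i x, 0 ≤ u i x ∧ u i x ≤ 1) ∧ (∀ x, ∃ i, u i x = 1) ∧
      (∀ i x y, u i x ≠ 0 → u i y ≠ 0 → κ (x, y) ≤ ε) ∧ (∀ i x, u i x ≠ 0 → w x ≤ R i) := by
  have hloc : ∀ z : S, ∃ (v : S → ℝ) (r : NNReal), Continuous v ∧ (∀ x, 0 ≤ v x ∧ v x ≤ 1) ∧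
      (∀ᶠ x in 𝓝 z, v x = 1) ∧ (∀ x y, v x ≠ 0 → v y ≠ 0 → κ (x, y) ≤ ε) ∧
      (∀ x, v x ≠ 0 → w x ≤ r) := by
    intro z
    have h1 : ∀ᶠ q in 𝓝 (z, z), κ (q.1, q.2) < ε :=
      hκ.continuousAt.eventually_lt continuousAt_const (by rw [hκ0]; exact hε)
    rw [nhds_prod_eq, Filter.eventually_prod_self_iff (r := fun a b => κ (a, b) < ε)] at h1
    obtain ⟨t, ht, hκt⟩ := h1
    have h2 : ∀ᶠ x in 𝓝 z, w x < w z + 1 :=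
      hw.continuousAt.eventually_lt continuousAt_const
        (ENNReal.lt_add_right (hwt z) one_ne_zero)
    obtain ⟨V, hV, hVo, hzV⟩ := mem_nhds_iff.1 (Filter.inter_mem ht h2)
    obtain ⟨f, hf, hfz, hf1⟩ := CompletelyRegularSpace.completely_regular z Vᶜ hVo.isClosed_compl
      (by simpa using hzV)
    have hfr : Continuous fun x => (f x : ℝ) := continuous_subtype_val.comp hf
    have hV' : ∀ x, min 1 (2 * (1 - (f x : ℝ))) ≠ 0 → x ∈ V := by
      intro x hx
      by_contra hxV
      apply hx
      have : f x = 1 := hf1 hxV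
      simp [this]
    refine ⟨fun x => min 1 (2 * (1 - (f x : ℝ))), (w z + 1).toNNReal, by fun_prop, ?_, ?_, ?_, ?_⟩
    · intro x
      refine ⟨le_min zero_le_one ?_, min_le_left _ _⟩
      have := (f x).2.2
      linarith
    · have : ∀ᶠ x in 𝓝 z, (f x : ℝ) < 1 / 2 :=
        hfr.continuousAt.eventually_lt continuousAt_const (by rw [hfz]; norm_num)
      filter_upwards [this] with x hx
      exact min_eq_left (by linarith)
    · intro x y hx hy
      exact (hκt x (hV (hV' x hx)).1 y (hV (hV' y hy)).1).le
    · intro x hx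
      rw [ENNReal.coe_toNNReal (ENNReal.add_ne_top.2 ⟨hwt z, one_ne_top⟩)]
      exact (hV (hV' x hx)).2.le
  choose v r hvc hv01 hv1 hvκ hvw using hloc
  obtain ⟨s, hs, hcov⟩ := TopologicalSpace.countable_cover_nhds (f := fun z => {x | v z x = 1}) hv1
  have hsne : s.Nonempty := by
    by_contra h
    rw [Set.not_nonempty_iff_eq_empty] at h
    subst h
    have : (Classical.arbitrary S) ∈ (Set.univ : Set S) := trivial
    rw [← hcov] at this
    simp at this
  obtain ⟨e, rfl⟩ := hs.exists_eq_range hsne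
  refine ⟨fun i => v (e i), fun i => r (e i), fun i => hvc _, fun i => hv01 _, fun x => ?_,
    fun i => hvκ _, fun i => hvw _⟩
  have : x ∈ (Set.univ : Set S) := trivial
  rw [← hcov] at this
  simpa using this

theorem exists_partition {S : Type*} [TopologicalSpace S] [SecondCountableTopology S]
    [CompletelyRegularSpace S] [Nonempty S] [MeasurableSpace S] [BorelSpace S]
    (κ : S × S → ℝ≥0∞) (hκ : Continuous κ) (hκ0 : ∀ x, κ (x, x) = 0)
    (w : S → ℝ≥0∞) (hw : Continuous w) (hwt : ∀ x, w x ≠ ∞) (ε : ℝ≥0∞) (hε : 0 < ε)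
    (μ : Measure S) (hμ : ∫⁻ x, w x ∂μ ≠ ∞) :
    ∃ (n : ℕ) (φ : ℕ → S → ℝ) (φ0 : S → ℝ) (R : ℕ → NNReal), (∀ i, Continuous (φ i)) ∧
      Continuous φ0 ∧ (∀ i x, 0 ≤ φ i x ∧ φ i x ≤ 1) ∧ (∀ x, 0 ≤ φ0 x ∧ φ0 x ≤ 1) ∧
      (∀ x, ∑ i ∈ Finset.range n, ENNReal.ofReal (φ i x) + ENNReal.ofReal (φ0 x) = 1) ∧
      (∀ i x y, ENNReal.ofReal (φ i x) ≠ 0 → ENNReal.ofReal (φ i y) ≠ 0 → κ (x, y) ≤ ε) ∧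
      (∀ i x, ENNReal.ofReal (φ i x) ≠ 0 → w x ≤ R i) ∧
      ∫⁻ x, ENNReal.ofReal (φ0 x) * w x ∂μ < ε := by
  obtain ⟨u, R, huc, hu01, hu1, huκ, huw⟩ := exists_bumps κ hκ hκ0 w hw hwt ε hε
  set ψ : ℕ → S → ℝ := fun n x => ∏ j ∈ Finset.range n, (1 - u j x) with hψ
  have hψc : ∀ n, Continuous (ψ n) := fun n => by
    apply continuous_finsetProd; intro i _; exact continuous_const.sub (huc i)
  have hψ0 : ∀ n x, 0 ≤ ψ n x := fun n x =>
    Finset.prod_nonneg fun i _ => by linarith [(hu01 i x).2]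
  have hψ1 : ∀ n x, ψ n x ≤ 1 := fun n x =>
    Finset.prod_le_one (fun i _ => by linarith [(hu01 i x).2]) fun i _ => by
      linarith [(hu01 i x).1]
  have hφ0 : ∀ i x, 0 ≤ u i x * ψ i x := fun i x => mul_nonneg (hu01 i x).1 (hψ0 i x)
  have hlim : Tendsto (fun n => ∫⁻ x, ENNReal.ofReal (ψ n x) * w x ∂μ) atTop
      (𝓝 (∫⁻ _x, 0 ∂μ)) := by
    refine tendsto_lintegral_of_dominated_convergence w ?_ ?_ hμ ?_
    · intro n
      exact ((hψc n).measurable.ennreal_ofReal).mul hw.measurable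
    · intro n
      refine Eventually.of_forall fun x => ?_
      calc _ ≤ 1 * w x := by
            exact mul_le_mul_left (ENNReal.ofReal_le_one.2 (hψ1 n x)) _
        _ = w x := one_mul _
    · refine Eventually.of_forall fun x => ?_
      obtain ⟨i, hi⟩ := hu1 x
      refine tendsto_const_nhds.congr' ?_
      filter_upwards [eventually_gt_atTop i] with n hn
      have : ψ n x = 0 := Finset.prod_eq_zero (Finset.mem_range.2 hn) (by rw [hi]; ring)
      simp [this]
  rw [lintegral_zero] at hlim
  obtain ⟨n, hn⟩ := (hlim.eventually (gt_mem_nhds hε)).exists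
  have hne : ∀ i x, ENNReal.ofReal (u i x * ψ i x) ≠ 0 → u i x ≠ 0 := by
    intro i x h h0
    apply h
    simp [h0]
  refine ⟨n, fun i x => u i x * ψ i x, ψ n, R, fun i => (huc i).mul (hψc i), hψc n, ?_,
    fun x => ⟨hψ0 n x, hψ1 n x⟩, ?_, fun i x y hx hy => huκ i x y (hne i x hx) (hne i y hy),
    fun i x hx => huw i x (hne i x hx), hn⟩
  · intro i x
    exact ⟨hφ0 i x, mul_le_one₀ (hu01 i x).2 (hψ0 i x) (hψ1 i x)⟩
  · intro x
    rw [← ENNReal.ofReal_sum_of_nonneg (fun i _ => hφ0 i x),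
      ← ENNReal.ofReal_add (Finset.sum_nonneg fun i _ => hφ0 i x) (hψ0 n x)]
    have : ∀ k, ∑ i ∈ Finset.range k, u i x * ψ i x + ψ k x = 1 := by
      intro k
      induction k with
      | zero => simp [hψ]
      | succ k ih =>
        rw [Finset.sum_range_succ]
        have : ψ (k + 1) x = ψ k x * (1 - u k x) := Finset.prod_range_succ _ _
        rw [this]; linarith
    rw [this, ENNReal.ofReal_one]

/-! ### Part 4: the path distance -/

section PathFacts

variable {E : Type*} [MetricSpace E] {k : ℕ}

theorem pathDist_rpow (p : ℝ) (hp : 1 ≤ p) (x y : Fin k → E) :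
    pathDist p edist x y ^ p = ∑ t, edist (x t) (y t) ^ p := by
  have hp0 : 0 < p := by linarith
  unfold pathDist
  rw [← ENNReal.rpow_mul, one_div, inv_mul_cancel₀ hp0.ne', ENNReal.rpow_one]

theorem pathDist_tri (p : ℝ) (hp : 1 ≤ p) (x y z : Fin k → E) :
    pathDist p edist x z ≤ pathDist p edist x y + pathDist p edist y z := by
  have hp0 : 0 < p := by linarith
  unfold pathDist
  refine le_trans ?_ (ENNReal.Lp_add_le Finset.univ (fun t => edist (x t) (y t))
    (fun t => edist (y t) (z t)) hp)
  gcongr with t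
  exact edist_triangle _ _ _

theorem pathDist_comm (p : ℝ) (x y : Fin k → E) :
    pathDist p edist x y = pathDist p edist y x := by
  unfold pathDist
  simp_rw [edist_comm]

theorem pathDist_rpow_ne_top (p : ℝ) (hp : 1 ≤ p) (x y : Fin k → E) :
    pathDist p edist x y ^ p ≠ ∞ := by
  rw [pathDist_rpow p hp]
  refine (ENNReal.sum_ne_top).2 fun t _ => ?_
  exact ENNReal.rpow_ne_top_of_nonneg (by linarith) (edist_ne_top _ _)

theorem pathDist_rpow_self (p : ℝ) (hp : 1 ≤ p) (x : Fin k → E) :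
    pathDist p edist x x ^ p = 0 := by
  rw [pathDist_rpow p hp]
  have hp0 : 0 < p := by linarith
  simp [hp0]

theorem pathDist_rpow_cont (p : ℝ) (hp : 1 ≤ p) :
    Continuous fun z : (Fin k → E) × (Fin k → E) => pathDist p edist z.1 z.2 ^ p := by
  simp_rw [pathDist_rpow p hp]
  refine continuous_finsetSum _ fun t _ => ?_
  refine ENNReal.continuous_rpow_const.comp ?_
  exact ((continuous_apply t).comp continuous_fst).edist ((continuous_apply t).comp continuous_snd)

theorem pathDist_cont (p : ℝ) :
    Continuous fun z : (Fin k → E) × (Fin k → E) => pathDist p edist z.1 z.2 := by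
  unfold pathDist
  refine ENNReal.continuous_rpow_const.comp ?_
  refine continuous_finsetSum _ fun t _ => ?_
  refine ENNReal.continuous_rpow_const.comp ?_
  exact ((continuous_apply t).comp continuous_fst).edist ((continuous_apply t).comp continuous_snd)

theorem pathDist_rpow_le (p : ℝ) (hp : 1 ≤ p) (x₀ x y : Fin k → E) :
    pathDist p edist x y ^ p ≤
      2 ^ (p - 1) * pathDist p edist x₀ x ^ p + 2 ^ (p - 1) * pathDist p edist x₀ y ^ p := by
  rw [← mul_add]
  refine le_trans ?_ (ENNReal.rpow_add_le_mul_rpow_add_rpow _ _ hp)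
  have : pathDist p edist x y ≤ pathDist p edist x₀ x + pathDist p edist x₀ y := by
    rw [pathDist_comm p x₀ x]; exact pathDist_tri p hp _ _ _
  gcongr

theorem pathDist_restr_le (p : ℝ) (hp : 1 ≤ p) (t : ℕ) (h : t ≤ k) (x y : Fin k → E) :
    pathDist p edist (restr t h x) (restr t h y) ^ p ≤ pathDist p edist x y ^ p := by
  rw [pathDist_rpow p hp, pathDist_rpow p hp]
  have hinj : Function.Injective (Fin.castLE h) := Fin.castLE_injective h
  calc _ = ∑ s ∈ Finset.univ.map ⟨Fin.castLE h, hinj⟩, edist (x s) (y s) ^ p := by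
        rw [Finset.sum_map]; rfl
    _ ≤ _ := Finset.sum_le_sum_of_subset (Finset.subset_univ _)

theorem pathDist_tailr_le (p : ℝ) (hp : 1 ≤ p) (t : ℕ) (h : t ≤ k) (x y : Fin k → E) :
    pathDist p edist (tailr t h x) (tailr t h y) ^ p ≤ pathDist p edist x y ^ p := by
  rw [pathDist_rpow p hp, pathDist_rpow p hp]
  let e : Fin (k - t) → Fin k := fun s => ⟨t + s.1, by have := s.2; omega⟩
  have hinj : Function.Injective e := by
    intro a b hab
    have := congrArg Fin.val hab
    simp only [e] at this
    exact Fin.ext (by omega)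
  calc _ = ∑ s ∈ Finset.univ.map ⟨e, hinj⟩, edist (x s) (y s) ^ p := by
        rw [Finset.sum_map]; rfl
    _ ≤ _ := Finset.sum_le_sum_of_subset (Finset.subset_univ _)

theorem continuous_restr (t : ℕ) (h : t ≤ k) : Continuous (restr (X := E) t h) :=
  continuous_pi fun _ => continuous_apply _

theorem continuous_tailr (t : ℕ) (h : t ≤ k) : Continuous (tailr (X := E) t h) :=
  continuous_pi fun _ => continuous_apply _

theorem measurable_restr [MeasurableSpace E] (t : ℕ) (h : t ≤ k) :
    Measurable (restr (X := E) t h) :=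
  measurable_pi_lambda _ fun _ => measurable_pi_apply _

theorem measurable_tailr [MeasurableSpace E] (t : ℕ) (h : t ≤ k) :
    Measurable (tailr (X := E) t h) :=
  measurable_pi_lambda _ fun _ => measurable_pi_apply _

theorem moment_any [MeasurableSpace E] (p : ℝ) (hp : 1 ≤ p) {ν : Measure (Fin k → E)}
    (hν : MemPp p (pathDist p edist) ν) (x₀ : Fin k → E) :
    ∫⁻ x, pathDist p edist x₀ x ^ p ∂ν ≠ ∞ := by
  obtain ⟨hprob, x₁, h1⟩ := hν
  have h2 : (2 : ℝ≥0∞) ^ (p - 1) ≠ ∞ :=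
    ENNReal.rpow_ne_top_of_nonneg (by linarith) ENNReal.ofNat_ne_top
  refine ne_top_of_le_ne_top ?_ (lintegral_mono fun x => pathDist_rpow_le p hp x₁ x₀ x)
  rw [lintegral_add_left measurable_const, lintegral_const, measure_univ, mul_one,
    lintegral_const_mul' _ _ h2]
  exact ENNReal.add_ne_top.2 ⟨ENNReal.mul_ne_top h2 (pathDist_rpow_ne_top p hp _ _),
    ENNReal.mul_ne_top h2 h1⟩

end PathFacts

/-! ### Part 5: stopping values -/

section StopFacts

variable {E : Type*} [MetricSpace E] [CompleteSpace E] [SecondCountableTopology E]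
  [MeasurableSpace E] [BorelSpace E] [Nonempty E]

theorem cont_stopVal (p : ℝ) (N : ℕ) (L : Fin N → (Fin N → E) → ℝ) (hL : ACp p edist L) :
    Continuous[TopologicalSpace.induced Subtype.val (stopTopWp (Y := E) p edist N), _]
      (fun ν : {μ : Measure (Fin N → E) // MemPp p (pathDist p edist) μ} => stopVal L ν.1) := by
  rw [continuous_iff_le_induced]
  have : (fun ν : {μ : Measure (Fin N → E) // MemPp p (pathDist p edist) μ} => stopVal L ν.1) =
      stopVal L ∘ Subtype.val := rfl
  rw [this, ← induced_compose]
  exact induced_mono (iInf_le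
    (fun L : {L : Fin N → (Fin N → E) → ℝ // ACp p edist L} =>
      TopologicalSpace.induced (stopVal L.1) inferInstance) ⟨L, hL⟩)

theorem isStopTime_const {N : ℕ} (c : Fin N) : IsStopTime (fun _ : Fin N → E => c) := by
  intro t
  exact MeasurableSet.const _

theorem stopVal_single (p : ℝ) (hp : 1 ≤ p) (N : ℕ) (hN : 0 < N) (f : (Fin N → E) → ℝ)
    (hf : Continuous f) (hf0 : ∀ x, 0 ≤ f x) (C : ℝ) (x₀ : Fin N → E)
    (hfC : ∀ x, f x ≤ C * (1 + ((pathDist p edist x₀ x) ^ p).toReal))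
    (ν : Measure (Fin N → E)) (hν : MemPp p (pathDist p edist) ν) :
    Integrable f ν ∧
    stopVal (fun t x => if t.1 + 1 = N then - f x else 0) ν = - ∫ x, f x ∂ν := by
  haveI := hν.1
  have hmom := moment_any p hp hν x₀
  have hintg : Integrable f ν := by
    have h1 : Integrable (fun x => C * (1 + ((pathDist p edist x₀ x) ^ p).toReal)) ν := by
      refine Integrable.const_mul (Integrable.add (integrable_const _) ?_) _
      refine integrable_toReal_of_lintegral_ne_top ?_ hmom
      exact ((pathDist_rpow_cont p hp).comp (Continuous.prodMk_right x₀)).measurable.aemeasurable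
    refine h1.mono' hf.measurable.aestronglyMeasurable (Eventually.of_forall fun x => ?_)
    rw [Real.norm_of_nonneg (hf0 x)]
    exact hfC x
  refine ⟨hintg, ?_⟩
  unfold stopVal
  have hlast : IsStopTime (fun _ : Fin N → E => (⟨N - 1, by omega⟩ : Fin N)) := isStopTime_const _
  haveI : Nonempty {τ : (Fin N → E) → Fin N // IsStopTime τ} := ⟨⟨_, hlast⟩⟩
  have hlow : ∀ τ : {τ : (Fin N → E) → Fin N // IsStopTime τ},
      - ∫ x, f x ∂ν ≤ ∫ x, (if (τ.1 x).1 + 1 = N then - f x else 0) ∂ν := by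
    intro τ
    rw [neg_le, ← integral_neg]
    refine integral_mono_of_nonneg (Eventually.of_forall fun x => ?_) hintg
      (Eventually.of_forall fun x => ?_)
    · simp only [Pi.zero_apply]
      split_ifs
      · simpa using hf0 x
      · simp
    · simp only
      split_ifs
      · simp
      · simpa using hf0 x
  refine le_antisymm ?_ (le_ciInf hlow)
  refine (ciInf_le ⟨- ∫ x, f x ∂ν, by rintro _ ⟨τ, rfl⟩; exact hlow τ⟩ ⟨_, hlast⟩).trans
    (le_of_eq ?_)
  · have : N - 1 + 1 = N := by omega
    simp [this, integral_neg]

theorem cont_integral (p : ℝ) (hp : 1 ≤ p) (N : ℕ) (hN : 0 < N) (f : (Fin N → E) → ℝ)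
    (hf : Continuous f) (hf0 : ∀ x, 0 ≤ f x) (C : ℝ) (x₀ : Fin N → E)
    (hfC : ∀ x, f x ≤ C * (1 + ((pathDist p edist x₀ x) ^ p).toReal)) :
    Continuous[TopologicalSpace.induced Subtype.val (stopTopWp (Y := E) p edist N), _]
      (fun ν : {μ : Measure (Fin N → E) // MemPp p (pathDist p edist) μ} => ∫ x, f x ∂ν.1) := by
  letI : TopologicalSpace {μ : Measure (Fin N → E) // MemPp p (pathDist p edist) μ} :=
    TopologicalSpace.induced Subtype.val (stopTopWp (Y := E) p edist N)
  have h1 := cont_stopVal p N (fun t (x : Fin N → E) => if t.1 + 1 = N then - f x else 0) (by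
    refine ⟨fun t => ?_, ?_, C, x₀, ?_⟩
    · by_cases h : t.1 + 1 = N
      · simp only [h, if_true]; exact hf.neg
      · simpa [h] using continuous_const
    · intro t x y hxy
      by_cases h : t.1 + 1 = N
      · have : x = y := funext fun s => hxy s (by rw [Fin.le_def]; have := s.2; omega)
        rw [this]
      · simp [h]
    · intro t x
      have := (hf0 x).trans (hfC x)
      by_cases h : t.1 + 1 = N
      · simpa [h, abs_of_nonneg (hf0 x)] using hfC x
      · simpa [h] using this)
  have h2 : (fun ν : {μ : Measure (Fin N → E) // MemPp p (pathDist p edist) μ} =>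
      ∫ x, f x ∂ν.1) = fun ν => - stopVal
        (fun t (x : Fin N → E) => if t.1 + 1 = N then - f x else 0) ν.1 := by
    funext ν
    rw [(stopVal_single p hp N hN f hf hf0 C x₀ hfC ν.1 ν.2).2, neg_neg]
  rw [h2]
  exact h1.neg

theorem cont_lintegral (p : ℝ) (hp : 1 ≤ p) (N : ℕ) (hN : 0 < N) (f : (Fin N → E) → ℝ)
    (hf : Continuous f) (hf0 : ∀ x, 0 ≤ f x) (C : ℝ) (x₀ : Fin N → E)
    (hfC : ∀ x, f x ≤ C * (1 + ((pathDist p edist x₀ x) ^ p).toReal)) :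
    Continuous[TopologicalSpace.induced Subtype.val (stopTopWp (Y := E) p edist N), _]
      (fun ν : {μ : Measure (Fin N → E) // MemPp p (pathDist p edist) μ} =>
        ∫⁻ x, ENNReal.ofReal (f x) ∂ν.1) := by
  letI : TopologicalSpace {μ : Measure (Fin N → E) // MemPp p (pathDist p edist) μ} :=
    TopologicalSpace.induced Subtype.val (stopTopWp (Y := E) p edist N)
  have h1 := cont_integral p hp N hN f hf hf0 C x₀ hfC
  have h2 : (fun ν : {μ : Measure (Fin N → E) // MemPp p (pathDist p edist) μ} =>
        ∫⁻ x, ENNReal.ofReal (f x) ∂ν.1) = fun ν => ENNReal.ofReal (∫ x, f x ∂ν.1) := by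
    funext ν
    rw [ofReal_integral_eq_lintegral_ofReal
      (stopVal_single p hp N hN f hf hf0 C x₀ hfC ν.1 ν.2).1 (Eventually.of_forall hf0)]
  rw [h2]
  exact ENNReal.continuous_ofReal.comp h1

/-- The conditional kernel of the future given the first `t` coordinates. -/
def kap {N : ℕ} (t : ℕ) (h : t ≤ N) (ν : Measure (Fin N → E)) :
    Kernel (Fin t → E) (Fin (N - t) → E) :=
  condK (ν.map (fun y => (restr t h y, tailr t h y)))

theorem kap_eq {N : ℕ} (t : ℕ) (h : t ≤ N) (ν : Measure (Fin N → E)) [IsProbabilityMeasure ν] :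
    kap t h ν = (ν.map (fun y => (restr t h y, tailr t h y))).condKernel := by
  unfold kap condK
  rw [dif_pos]

theorem kap_markov {N : ℕ} (t : ℕ) (h : t ≤ N) (ν : Measure (Fin N → E))
    [IsProbabilityMeasure ν] : IsMarkovKernel (kap t h ν) := by
  rw [kap_eq]; infer_instance

theorem kap_disint {N : ℕ} (t : ℕ) (h : t ≤ N) (ν : Measure (Fin N → E))
    [IsProbabilityMeasure ν] :
    (ν.map (restr t h)) ⊗ₘ kap t h ν = ν.map (fun y => (restr t h y, tailr t h y)) := by
  rw [kap_eq]
  have := (ν.map (fun y => (restr t h y, tailr t h y))).disintegrate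
    (ν.map (fun y => (restr t h y, tailr t h y))).condKernel
  conv_rhs => rw [← this]
  rw [Measure.fst_map_prodMk (measurable_tailr t h)]

theorem kap_lintegral {N : ℕ} (t : ℕ) (h : t ≤ N) (ν : Measure (Fin N → E))
    [IsProbabilityMeasure ν] (F : (Fin (N - t) → E) → ℝ≥0∞) (hF : Measurable F) :
    ∫⁻ a, ∫⁻ b, F b ∂(kap t h ν a) ∂(ν.map (restr t h)) = ∫⁻ x, F (tailr t h x) ∂ν := by
  haveI := kap_markov t h ν
  haveI : IsProbabilityMeasure (ν.map (restr t h)) :=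
    Measure.isProbabilityMeasure_map (measurable_restr t h).aemeasurable
  have h1 := Measure.lintegral_compProd (μ := ν.map (restr t h)) (κ := kap t h ν)
    (f := fun z => F z.2) (by fun_prop)
  rw [← h1, kap_disint, lintegral_map (by fun_prop)
    ((measurable_restr t h).prodMk (measurable_tailr t h))]

theorem kap_integral {N : ℕ} (t : ℕ) (h : t ≤ N) (ν : Measure (Fin N → E))
    [IsProbabilityMeasure ν] (F : (Fin t → E) × (Fin (N - t) → E) → ℝ) (hF : Measurable F)
    (hF1 : ∀ z, ‖F z‖ ≤ 1) :
    ∫ x, F (restr t h x, tailr t h x) ∂ν =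
      ∫ x, ∫ b, F (restr t h x, b) ∂(kap t h ν (restr t h x)) ∂ν := by
  haveI := kap_markov t h ν
  haveI : IsProbabilityMeasure (ν.map (restr t h)) :=
    Measure.isProbabilityMeasure_map (measurable_restr t h).aemeasurable
  have hm := (measurable_restr (E := E) t h).prodMk (measurable_tailr (E := E) t h)
  have hintg : Integrable F (ν.map (restr t h) ⊗ₘ kap t h ν) :=
    (integrable_const (1 : ℝ)).mono' hF.aestronglyMeasurable (Eventually.of_forall hF1)
  have h1 := Measure.integral_compProd (μ := ν.map (restr t h)) (κ := kap t h ν) hintg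
  rw [kap_disint, integral_map hm.aemeasurable hF.aestronglyMeasurable,
    integral_map (measurable_restr t h).aemeasurable] at h1
  · exact h1
  · exact (hF.stronglyMeasurable.integral_kernel_prod_right').aestronglyMeasurable

theorem comap_restr_mono {N t t' : ℕ} (h : t ≤ N) (h' : t' ≤ N) (htt : t ≤ t')
    {s : Set (Fin N → E)}
    (hs : MeasurableSet[MeasurableSpace.comap (restr (X := E) t h) inferInstance] s) :
    MeasurableSet[MeasurableSpace.comap (restr (X := E) t' h') inferInstance] s := by
  obtain ⟨B, hB, rfl⟩ := hs
  refine ⟨restr t htt ⁻¹' B, ?_, rfl⟩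
  exact (measurable_pi_lambda _ fun _ => measurable_pi_apply _ : Measurable (restr t htt)) hB

/-- The process used to test the conditional laws. -/
def testL {N : ℕ} (r : ℕ) (h : r + 1 ≤ N) (g : (Fin (r + 1) → E) → ℝ)
    (φ : (Fin (N - (r + 1)) → E) → ℝ) : Fin N → (Fin N → E) → ℝ :=
  fun s x => if s.1 = r then g (restr (r + 1) h x)
    else if s.1 + 1 = N then φ (tailr (r + 1) h x) else 1

theorem stopVal_testL {N : ℕ} (r : ℕ) (h : r + 1 ≤ N) (hr : r + 1 < N)
    (g : (Fin (r + 1) → E) → ℝ) (hg : Continuous g) (hg01 : ∀ x, 0 ≤ g x ∧ g x ≤ 1)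
    (φ : (Fin (N - (r + 1)) → E) → ℝ) (hφ : Continuous φ) (hφ01 : ∀ x, 0 ≤ φ x ∧ φ x ≤ 1)
    (ν : Measure (Fin N → E)) [IsProbabilityMeasure ν] :
    stopVal (testL r h g φ) ν = ∫ x, min (g (restr (r + 1) h x))
      (∫ b, φ b ∂(kap (r + 1) h ν (restr (r + 1) h x))) ∂ν := by
  classical
  haveI := kap_markov (r + 1) h ν
  set Φ : (Fin (r + 1) → E) → ℝ := fun a => ∫ b, φ b ∂(kap (r + 1) h ν a) with hΦ
  have hΦm : Measurable Φ :=
    (StronglyMeasurable.integral_kernel_prod_right'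
      (f := fun z : (Fin (r + 1) → E) × (Fin (N - (r + 1)) → E) => φ z.2)
      (hφ.measurable.comp measurable_snd).stronglyMeasurable).measurable
  have hΦ01 : ∀ a, 0 ≤ Φ a ∧ Φ a ≤ 1 := by
    intro a
    refine ⟨integral_nonneg fun b => (hφ01 b).1, ?_⟩
    calc Φ a ≤ ∫ _b, (1 : ℝ) ∂(kap (r + 1) h ν a) := by
          refine integral_mono_of_nonneg (Eventually.of_forall fun b => (hφ01 b).1)
            (integrable_const _) (Eventually.of_forall fun b => (hφ01 b).2)
      _ = 1 := by simp
  -- value of a simple rule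
  have hval : ∀ A : Set (Fin (r + 1) → E), MeasurableSet A →
      ∫ x, (if restr (r + 1) h x ∈ A then g (restr (r + 1) h x) else φ (tailr (r + 1) h x)) ∂ν =
      ∫ x, (if restr (r + 1) h x ∈ A then g (restr (r + 1) h x) else Φ (restr (r + 1) h x)) ∂ν := by
    intro A hA
    have := kap_integral (r + 1) h ν (fun z => if z.1 ∈ A then g z.1 else φ z.2)
      (Measurable.ite (measurable_fst hA) (by fun_prop) (by fun_prop))
      (fun z => by
        split_ifs
        · rw [Real.norm_of_nonneg (hg01 _).1]; exact (hg01 _).2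
        · rw [Real.norm_of_nonneg (hφ01 _).1]; exact (hφ01 _).2)
    rw [this]
    refine integral_congr_ae (Eventually.of_forall fun x => ?_)
    simp only
    split_ifs <;> simp [hΦ]
  have hminint : Integrable (fun x => min (g (restr (r + 1) h x)) (Φ (restr (r + 1) h x))) ν := by
    refine (integrable_const (1 : ℝ)).mono' ?_ (Eventually.of_forall fun x => ?_)
    · exact ((hg.measurable.comp (measurable_restr _ h)).min
        (hΦm.comp (measurable_restr _ h))).aestronglyMeasurable
    · rw [Real.norm_of_nonneg (le_min (hg01 _).1 (hΦ01 _).1)]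
      exact (min_le_left _ _).trans (hg01 _).2
  have hbint : ∀ F : (Fin N → E) → ℝ, Measurable F → (∀ x, 0 ≤ F x ∧ F x ≤ 1) →
      Integrable F ν := by
    intro F hF hF01
    refine (integrable_const (1 : ℝ)).mono' hF.aestronglyMeasurable
      (Eventually.of_forall fun x => ?_)
    rw [Real.norm_of_nonneg (hF01 x).1]; exact (hF01 x).2
  have hL01 : ∀ s x, 0 ≤ testL r h g φ s x ∧ testL r h g φ s x ≤ 1 := by
    intro s x
    unfold testL
    split_ifs
    · exact hg01 _
    · exact hφ01 _
    · norm_num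
  have hLm : ∀ s, Measurable (testL r h g φ s) := by
    intro s
    unfold testL
    split_ifs
    · exact hg.measurable.comp (measurable_restr _ h)
    · exact hφ.measurable.comp (measurable_tailr _ h)
    · exact measurable_const
  have hlow : ∀ τ : {τ : (Fin N → E) → Fin N // IsStopTime τ},
      ∫ x, min (g (restr (r + 1) h x)) (Φ (restr (r + 1) h x)) ∂ν ≤
        ∫ x, testL r h g φ (τ.1 x) x ∂ν := by
    intro τ
    have hτm : ∀ s, MeasurableSet {x | τ.1 x = s} := by
      intro s
      obtain ⟨B, hB, hBe⟩ := τ.2 s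
      rw [← hBe]
      exact measurable_restr _ _ hB
    have hE : MeasurableSet[MeasurableSpace.comap (restr (X := E) (r + 1) h) inferInstance]
        {x | (τ.1 x).1 ≤ r} := by
      have : {x | (τ.1 x).1 ≤ r} = ⋃ s : {s : Fin N // s.1 ≤ r}, {x | τ.1 x = s.1} := by
        ext x
        simp
      rw [this]
      refine MeasurableSet.iUnion fun s => ?_
      exact comap_restr_mono _ h (Nat.succ_le_succ s.2) (τ.2 s.1)
    obtain ⟨A, hA, hAe⟩ := hE
    have hAx : ∀ x, restr (r + 1) h x ∈ A ↔ (τ.1 x).1 ≤ r := by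
      intro x
      have : x ∈ restr (r + 1) h ⁻¹' A ↔ x ∈ {x | (τ.1 x).1 ≤ r} := by rw [hAe]
      exact this
    have hτint : Integrable (fun x => testL r h g φ (τ.1 x) x) ν := by
      refine hbint _ ?_ fun x => hL01 _ _
      have : (fun x => testL r h g φ (τ.1 x) x) =
          fun x => ∑ s, if τ.1 x = s then testL r h g φ s x else 0 := by
        funext x; simp
      rw [this]
      refine Finset.measurable_sum _ fun s _ => ?_
      exact Measurable.ite (hτm s) (hLm s) measurable_const
    have hgm : Measurable fun x => g (restr (r + 1) h x) := hg.measurable.comp (measurable_restr _ h)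
    have hφm : Measurable fun x => φ (tailr (r + 1) h x) := hφ.measurable.comp (measurable_tailr _ h)
    have hΦm' : Measurable fun x => Φ (restr (r + 1) h x) := hΦm.comp (measurable_restr _ h)
    calc _ ≤ ∫ x, (if restr (r + 1) h x ∈ A then g (restr (r + 1) h x)
          else Φ (restr (r + 1) h x)) ∂ν := by
          refine integral_mono hminint (hbint _ ?_ ?_) fun x => ?_
          · exact Measurable.ite (measurable_restr _ h hA) hgm hΦm'
          · intro x; split_ifs
            · exact hg01 _
            · exact hΦ01 _
          · simp only
            split_ifs
            · exact min_le_left _ _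
            · exact min_le_right _ _
      _ = ∫ x, (if restr (r + 1) h x ∈ A then g (restr (r + 1) h x)
          else φ (tailr (r + 1) h x)) ∂ν := (hval A hA).symm
      _ ≤ _ := by
          refine integral_mono (hbint _ ?_ ?_) hτint fun x => ?_
          · exact Measurable.ite (measurable_restr _ h hA) hgm hφm
          · intro x; split_ifs
            · exact hg01 _
            · exact hφ01 _
          · simp only [hAx]
            unfold testL
            have := hg01 (restr (r + 1) h x)
            have := hφ01 (tailr (r + 1) h x)
            split_ifs <;> first | linarith | omega
  unfold stopVal
  set A : Set (Fin (r + 1) → E) := {a | g a ≤ Φ a} with hAdef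
  have hA : MeasurableSet A := measurableSet_le hg.measurable hΦm
  have hst : IsStopTime (fun x : Fin N → E =>
      if restr (r + 1) h x ∈ A then (⟨r, h⟩ : Fin N) else ⟨N - 1, by omega⟩) := by
    have hbase : MeasurableSet[MeasurableSpace.comap (restr (X := E) (r + 1) h) inferInstance]
        (restr (r + 1) h ⁻¹' A) := ⟨A, hA, rfl⟩
    intro s
    by_cases h1 : s.1 = r
    · have : {x : Fin N → E | (if restr (r + 1) h x ∈ A then (⟨r, h⟩ : Fin N)
          else ⟨N - 1, by omega⟩) = s} = restr (r + 1) h ⁻¹' A := by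
        ext x
        simp only [Set.mem_setOf_eq, Set.mem_preimage]
        split_ifs with hx
        · simp [hx, Fin.ext_iff, h1]
        · simp only [hx, Fin.ext_iff, h1, iff_false]; omega
      rw [this]
      exact comap_restr_mono _ _ (by omega) hbase
    · by_cases h2 : s.1 = N - 1
      · have : {x : Fin N → E | (if restr (r + 1) h x ∈ A then (⟨r, h⟩ : Fin N)
            else ⟨N - 1, by omega⟩) = s} = (restr (r + 1) h ⁻¹' A)ᶜ := by
          ext x
          simp only [Set.mem_setOf_eq, Set.mem_preimage, Set.mem_compl_iff]
          split_ifs with hx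
          · simp only [hx, Fin.ext_iff, not_true, iff_false]; omega
          · simp [hx, Fin.ext_iff, h2]
        rw [this]
        exact comap_restr_mono _ _ (by omega) hbase.compl
      · have : {x : Fin N → E | (if restr (r + 1) h x ∈ A then (⟨r, h⟩ : Fin N)
            else ⟨N - 1, by omega⟩) = s} = ∅ := by
          ext x
          simp only [Set.mem_setOf_eq, Set.mem_empty_iff_false, iff_false]
          split_ifs with hx
          · rw [Fin.ext_iff]; simp only; omega
          · rw [Fin.ext_iff]; simp only; omega
        rw [this]
        exact MeasurableSpace.measurableSet_empty _
  haveI : Nonempty {τ : (Fin N → E) → Fin N // IsStopTime τ} := ⟨⟨_, hst⟩⟩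
  refine le_antisymm ?_ (le_ciInf hlow)
  refine (ciInf_le ⟨∫ x, min (g (restr (r + 1) h x)) (Φ (restr (r + 1) h x)) ∂ν,
    by rintro _ ⟨τ, rfl⟩; exact hlow τ⟩ ⟨_, hst⟩).trans (le_of_eq ?_)
  · have h1 : ∀ x, testL r h g φ (if restr (r + 1) h x ∈ A then (⟨r, h⟩ : Fin N)
        else ⟨N - 1, by omega⟩) x = if restr (r + 1) h x ∈ A then g (restr (r + 1) h x)
          else φ (tailr (r + 1) h x) := by
      intro x
      unfold testL
      have e1 : ¬ (N - 1 = r) := by omega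
      have e2 : N - 1 + 1 = N := by omega
      split_ifs <;> simp_all
    simp only [h1]
    rw [hval A hA]
    refine integral_congr_ae (Eventually.of_forall fun x => ?_)
    change (if g (restr (r + 1) h x) ≤ Φ (restr (r + 1) h x) then _ else _) = _
    exact (min_def _ _).symm

theorem dd_ofReal (a b : ℝ) (ha : 0 ≤ a) (hb : 0 ≤ b) :
    dd (ENNReal.ofReal a) (ENNReal.ofReal b) = ENNReal.ofReal |a - b| := by
  unfold dd
  rw [← ENNReal.ofReal_sub a hb, ← ENNReal.ofReal_sub b ha]
  rcases le_total a b with h | h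
  · rw [ENNReal.ofReal_of_nonpos (by linarith : a - b ≤ 0), zero_add,
      abs_of_nonpos (by linarith), neg_sub]
  · rw [ENNReal.ofReal_of_nonpos (by linarith : b - a ≤ 0), add_zero, abs_of_nonneg (by linarith)]

theorem cont_dd (p : ℝ) (hp : 1 ≤ p) {N : ℕ} (r : ℕ) (h : r + 1 ≤ N) (hr : r + 1 < N)
    (g : (Fin (r + 1) → E) → ℝ) (hg : Continuous g) (hg01 : ∀ x, 0 ≤ g x ∧ g x ≤ 1)
    (φ : (Fin (N - (r + 1)) → E) → ℝ) (hφ : Continuous φ) (hφ01 : ∀ x, 0 ≤ φ x ∧ φ x ≤ 1) :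
    Continuous[TopologicalSpace.induced Subtype.val (stopTopWp (Y := E) p edist N), _]
      (fun ν : {μ : Measure (Fin N → E) // MemPp p (pathDist p edist) μ} =>
        ∫⁻ a, dd (ENNReal.ofReal (g a)) (∫⁻ b, ENNReal.ofReal (φ b) ∂(kap (r + 1) h ν.1 a))
          ∂(ν.1.map (restr (r + 1) h))) := by
  letI : TopologicalSpace {μ : Measure (Fin N → E) // MemPp p (pathDist p edist) μ} :=
    TopologicalSpace.induced Subtype.val (stopTopWp (Y := E) p edist N)
  have hN : 0 < N := by omega
  obtain ⟨x₀⟩ : Nonempty (Fin N → E) := inferInstance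
  have hbd : ∀ (v : ℝ) (x : Fin N → E), v ≤ 1 → v ≤ 1 * (1 + ((pathDist p edist x₀ x) ^ p).toReal) := by
    intro v x hv
    have : 0 ≤ ((pathDist p edist x₀ x) ^ p).toReal := ENNReal.toReal_nonneg
    linarith
  have c1 := cont_integral p hp N hN (fun x : Fin N → E => g (restr (r + 1) h x))
    (hg.comp (continuous_restr _ h)) (fun x => (hg01 _).1) 1 x₀ (fun x => hbd _ x (hg01 _).2)
  have c2 := cont_integral p hp N hN (fun x : Fin N → E => φ (tailr (r + 1) h x))
    (hφ.comp (continuous_tailr _ h)) (fun x => (hφ01 _).1) 1 x₀ (fun x => hbd _ x (hφ01 _).2)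
  have c3 := cont_stopVal p N (testL (E := E) r h g φ) (by
    refine ⟨fun s => ?_, ?_, 1, x₀, ?_⟩
    · unfold testL
      split_ifs
      · exact hg.comp (continuous_restr _ h)
      · exact hφ.comp (continuous_tailr _ h)
      · exact continuous_const
    · intro s x y hxy
      unfold testL
      split_ifs with h1 h2
      · congr 1
        funext i
        exact hxy _ (by rw [Fin.le_def]; simp only [Fin.val_castLE]; have := i.2; omega)
      · have : x = y := funext fun i => hxy i (by rw [Fin.le_def]; have := i.2; omega)
        rw [this]
      · rfl
    · intro s x
      refine hbd _ x ?_
      unfold testL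
      split_ifs
      · rw [abs_of_nonneg (hg01 _).1]; exact (hg01 _).2
      · rw [abs_of_nonneg (hφ01 _).1]; exact (hφ01 _).2
      · simp)
  have key : ∀ ν : {μ : Measure (Fin N → E) // MemPp p (pathDist p edist) μ},
      ∫⁻ a, dd (ENNReal.ofReal (g a)) (∫⁻ b, ENNReal.ofReal (φ b) ∂(kap (r + 1) h ν.1 a))
          ∂(ν.1.map (restr (r + 1) h)) =
      ENNReal.ofReal (∫ x, g (restr (r + 1) h x) ∂ν.1 + ∫ x, φ (tailr (r + 1) h x) ∂ν.1 -
        2 * stopVal (testL r h g φ) ν.1) := by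
    intro ν
    haveI := ν.2.1
    haveI := kap_markov (r + 1) h ν.1
    set Φ : (Fin (r + 1) → E) → ℝ := fun a => ∫ b, φ b ∂(kap (r + 1) h ν.1 a) with hΦ
    have hΦm : Measurable Φ :=
      (StronglyMeasurable.integral_kernel_prod_right'
        (f := fun z : (Fin (r + 1) → E) × (Fin (N - (r + 1)) → E) => φ z.2)
        (hφ.measurable.comp measurable_snd).stronglyMeasurable).measurable
    have hφint : ∀ a, Integrable φ (kap (r + 1) h ν.1 a) := by
      intro a
      refine (integrable_const (1 : ℝ)).mono' hφ.measurable.aestronglyMeasurable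
        (Eventually.of_forall fun x => ?_)
      rw [Real.norm_of_nonneg (hφ01 x).1]; exact (hφ01 x).2
    have hΦ01 : ∀ a, 0 ≤ Φ a ∧ Φ a ≤ 1 := by
      intro a
      refine ⟨integral_nonneg fun b => (hφ01 b).1, ?_⟩
      calc Φ a ≤ ∫ _b, (1 : ℝ) ∂(kap (r + 1) h ν.1 a) :=
            integral_mono (hφint a) (integrable_const _) fun b => (hφ01 b).2
        _ = 1 := by simp
    have hbint : ∀ F : (Fin N → E) → ℝ, Measurable F → (∀ x, 0 ≤ F x ∧ F x ≤ 1) →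
        Integrable F ν.1 := by
      intro F hF hF01
      refine (integrable_const (1 : ℝ)).mono' hF.aestronglyMeasurable
        (Eventually.of_forall fun x => ?_)
      rw [Real.norm_of_nonneg (hF01 x).1]; exact (hF01 x).2
    have i1 := hbint (fun x => g (restr (r + 1) h x)) (hg.measurable.comp (measurable_restr _ h))
      (fun x => hg01 _)
    have i2 := hbint (fun x => Φ (restr (r + 1) h x)) (hΦm.comp (measurable_restr _ h))
      (fun x => hΦ01 _)
    have hφΦ : ∫ x, φ (tailr (r + 1) h x) ∂ν.1 = ∫ x, Φ (restr (r + 1) h x) ∂ν.1 :=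
      kap_integral (r + 1) h ν.1 (fun z => φ z.2) (by fun_prop) (fun z => by
        rw [Real.norm_of_nonneg (hφ01 _).1]; exact (hφ01 _).2)
    have hdd : ∀ a, dd (ENNReal.ofReal (g a))
        (∫⁻ b, ENNReal.ofReal (φ b) ∂(kap (r + 1) h ν.1 a)) = ENNReal.ofReal |g a - Φ a| := by
      intro a
      rw [← ofReal_integral_eq_lintegral_ofReal (hφint a)
        (Eventually.of_forall fun b => (hφ01 b).1)]
      exact dd_ofReal _ _ (hg01 a).1 (hΦ01 a).1
    simp_rw [hdd]
    have hm : Measurable fun a => ENNReal.ofReal |g a - Φ a| :=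
      (continuous_abs.measurable.comp (hg.measurable.sub hΦm)).ennreal_ofReal
    have i3 : Integrable (fun x => |g (restr (r + 1) h x) - Φ (restr (r + 1) h x)|) ν.1 :=
      (i1.sub i2).abs
    have i4 : Integrable (fun x => g (restr (r + 1) h x) + Φ (restr (r + 1) h x)) ν.1 :=
      i1.add i2
    have i5 : Integrable (fun x => 2 * min (g (restr (r + 1) h x)) (∫ b, φ b
        ∂(kap (r + 1) h ν.1 (restr (r + 1) h x)))) ν.1 :=
      (i1.inf i2).const_mul 2
    rw [lintegral_map hm (measurable_restr _ h),
      ← ofReal_integral_eq_lintegral_ofReal i3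
        (Eventually.of_forall fun x => abs_nonneg _),
      stopVal_testL r h hr g hg hg01 φ hφ hφ01 ν.1, hφΦ, ← integral_const_mul, ← integral_add i1 i2,
      ← integral_sub i4 i5]
    congr 1
    refine integral_congr_ae (Eventually.of_forall fun x => ?_)
    change |g _ - Φ _| = g _ + Φ _ - 2 * min (g _) (Φ _)
    rcases le_total (g (restr (r + 1) h x)) (Φ (restr (r + 1) h x)) with h' | h'
    · rw [min_eq_left h', abs_of_nonpos (by linarith)]; ring
    · rw [min_eq_right h', abs_of_nonneg (by linarith)]; ring
  simp_rw [key]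
  exact ENNReal.continuous_ofReal.comp ((c1.add c2).sub (continuous_const.mul c3))

end StopFacts

/-! ### Part 6: the main estimate -/

theorem dd_self (a : ℝ≥0∞) : dd a a = 0 := by simp [dd]

theorem dd_comm (a b : ℝ≥0∞) : dd a b = dd b a := by unfold dd; rw [add_comm]

theorem dd_tri (a b c : ℝ≥0∞) : dd a c ≤ dd a b + dd b c := by
  unfold dd
  have h1 : a - c ≤ (a - b) + (b - c) := tsub_le_tsub_add_tsub
  have h2 : c - a ≤ (c - b) + (b - a) := tsub_le_tsub_add_tsub
  calc _ ≤ ((a - b) + (b - c)) + ((c - b) + (b - a)) := add_le_add h1 h2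
    _ = _ := by ring

theorem dd_cont (a : ℝ≥0∞) (ha : a ≠ ∞) : Continuous (dd a) :=
  (ENNReal.continuous_sub_left ha).add (ENNReal.continuous_sub_right a)

theorem dd_meas {S : Type*} [MeasurableSpace S] {f g : S → ℝ≥0∞} (hf : Measurable f)
    (hg : Measurable g) : Measurable fun x => dd (f x) (g x) :=
  (hf.sub hg).add (hg.sub hf)

theorem inner_bound {A B : Type*} [MeasurableSpace A] [StandardBorelSpace A] [Nonempty A]
    [MeasurableSpace B] [StandardBorelSpace B] [Nonempty B]
    (p : ℝ) (hp : 1 ≤ p) (DA : A → A → ℝ≥0∞) (DB : B → B → ℝ≥0∞)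
    (hDA : Measurable fun z : A × A => DA z.1 z.2)
    (hDB : Measurable fun z : B × B => DB z.1 z.2)
    (htA : ∀ x y z, DA x z ≤ DA x y + DA y z) (htB : ∀ x y z, DB x z ≤ DB x y + DB y z)
    (μ ν : Measure A) [IsProbabilityMeasure μ] [IsProbabilityMeasure ν]
    (k k' : Kernel A B) [IsMarkovKernel k] [IsMarkovKernel k']
    (q : Measure (A × A)) (hq : q ∈ Cpl μ ν)
    (n : ℕ) (φ : ℕ → B → ℝ≥0∞) (φ0 : B → ℝ≥0∞) (hφ : ∀ i, Measurable (φ i))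
    (hφ0 : Measurable φ0) (hsum : ∀ x, ∑ i ∈ Finset.range n, φ i x + φ0 x = 1)
    (hφ1 : ∀ i x, φ i x ≤ 1) (w : B → ℝ≥0∞) (hw : Measurable w)
    (hκw : ∀ x y, DB x y ^ p ≤ w x + w y) (ε : ℝ≥0∞) (R : ℕ → ℝ≥0∞)
    (hε : ∀ i x y, φ i x ≠ 0 → φ i y ≠ 0 → DB x y ^ p ≤ ε)
    (hR : ∀ i x, φ i x ≠ 0 → w x ≤ R i)
    (g : ℕ → A → ℝ≥0∞) (hg : ∀ i, Measurable (g i))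
    (c : Measure (A × Measure B)) :
    Wp p (prodDist p DA (Wp p DB)) c (ν.map fun a => (a, k' a)) ≤
      Wp p (prodDist p DA (Wp p DB)) c (μ.map fun a => (a, k a)) +
        ((∫⁻ z, (DA z.1 z.2 ^ p + ∑ i ∈ Finset.range n, R i * dd (g i z.1) (g i z.2)) ∂q) + ε +
          ((∑ i ∈ Finset.range n, R i * ∫⁻ a, dd (g i a) (∫⁻ b, φ i b ∂(k a)) ∂μ) +
          ∑ i ∈ Finset.range n, R i * ∫⁻ a, dd (g i a) (∫⁻ b, φ i b ∂(k' a)) ∂ν) +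
          ((∫⁻ a, ∫⁻ b, φ0 b * w b ∂(k a) ∂μ) + ∫⁻ a, ∫⁻ b, φ0 b * w b ∂(k' a) ∂ν)) ^ (1 / p) := by
  have hp0 : 0 < p := by linarith
  haveI : IsProbabilityMeasure q := Cpl_isProb_left hq
  have hkφ : ∀ i, Measurable fun a => ∫⁻ b, φ i b ∂(k a) := fun i => (hφ i).lintegral_kernel
  have hkφ' : ∀ i, Measurable fun a => ∫⁻ b, φ i b ∂(k' a) := fun i => (hφ i).lintegral_kernel
  have hk0 : Measurable fun a => ∫⁻ b, φ0 b * w b ∂(k a) := (hφ0.mul hw).lintegral_kernel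
  have hk0' : Measurable fun a => ∫⁻ b, φ0 b * w b ∂(k' a) := (hφ0.mul hw).lintegral_kernel
  have hDAp : Measurable fun z : A × A => DA z.1 z.2 ^ p := hDA.pow_const p
  set H : (A × Measure B) × A → ℝ≥0∞ := fun z => DA z.1.1 z.2 ^ p +
    (ε + ∑ i ∈ Finset.range n, R i * dd (∫⁻ b, φ i b ∂z.1.2) (∫⁻ b, φ i b ∂(k' z.2)) +
      (∫⁻ b, φ0 b * w b ∂z.1.2 + ∫⁻ b, φ0 b * w b ∂(k' z.2))) with hH
  have hHm : Measurable H := by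
    have e1 : Measurable fun z : (A × Measure B) × A => DA z.1.1 z.2 ^ p :=
      hDAp.comp ((measurable_fst.comp measurable_fst).prodMk measurable_snd)
    have e2 : ∀ i, Measurable fun z : (A × Measure B) × A => ∫⁻ b, φ i b ∂z.1.2 := fun i =>
      (Measure.measurable_lintegral (hφ i)).comp (measurable_snd.comp measurable_fst)
    have e3 : ∀ i, Measurable fun z : (A × Measure B) × A => ∫⁻ b, φ i b ∂(k' z.2) := fun i =>
      (hkφ' i).comp measurable_snd
    have e4 : Measurable fun z : (A × Measure B) × A => ∫⁻ b, φ0 b * w b ∂z.1.2 :=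
      (Measure.measurable_lintegral (hφ0.mul hw)).comp (measurable_snd.comp measurable_fst)
    have e5 : Measurable fun z : (A × Measure B) × A => ∫⁻ b, φ0 b * w b ∂(k' z.2) :=
      hk0'.comp measurable_snd
    refine e1.add ((measurable_const.add ?_).add (e4.add e5))
    exact Finset.measurable_fun_sum _ fun i _ => (dd_meas (e2 i) (e3 i)).const_mul _
  refine (outer_glue p hp DA DB hDB htA htB μ ν k k' q hq H hHm ?_ c).trans ?_
  · intro z a hz
    obtain ⟨π, hπ, hπle⟩ := exists_coupling z.2 (k' a) n φ φ0 hφ hφ0 hsum hφ1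
      (fun y => DB y.1 y.2 ^ p) (hDB.pow_const p) w hw hκw ε R hε hR
    refine add_le_add le_rfl ?_
    refine le_trans ?_ hπle
    have h1 : Wp p DB z.2 (k' a) ≤ (∫⁻ y, DB y.1 y.2 ^ p ∂π) ^ (1 / p) :=
      iInf₂_le_of_le π hπ le_rfl
    calc Wp p DB z.2 (k' a) ^ p ≤ ((∫⁻ y, DB y.1 y.2 ^ p ∂π) ^ (1 / p)) ^ p :=
          ENNReal.rpow_le_rpow h1 hp0.le
      _ = _ := by rw [← ENNReal.rpow_mul, one_div, inv_mul_cancel₀ hp0.ne', ENNReal.rpow_one]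
  · refine add_le_add le_rfl (ENNReal.rpow_le_rpow ?_ (by positivity))
    have hfst : ∀ f : A → ℝ≥0∞, Measurable f → ∫⁻ z, f z.1 ∂q = ∫⁻ a, f a ∂μ := by
      intro f hf
      rw [← hq.1, lintegral_map hf measurable_fst]
    have hsnd : ∀ f : A → ℝ≥0∞, Measurable f → ∫⁻ z, f z.2 ∂q = ∫⁻ a, f a ∂ν := by
      intro f hf
      rw [← hq.2, lintegral_map hf measurable_snd]
    have m1 : ∀ i, Measurable fun a => dd (g i a) (∫⁻ b, φ i b ∂(k a)) :=
      fun i => dd_meas (hg i) (hkφ i)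
    have m2 : ∀ i, Measurable fun a => dd (g i a) (∫⁻ b, φ i b ∂(k' a)) :=
      fun i => dd_meas (hg i) (hkφ' i)
    have M0 : Measurable fun z : A × A =>
        DA z.1 z.2 ^ p + ∑ i ∈ Finset.range n, R i * dd (g i z.1) (g i z.2) :=
      hDAp.add (Finset.measurable_fun_sum _ fun i _ =>
        (dd_meas ((hg i).comp measurable_fst) ((hg i).comp measurable_snd)).const_mul _)
    have M1 : ∀ i, Measurable fun z : A × A => R i * dd (g i z.1) (∫⁻ b, φ i b ∂(k z.1)) :=
      fun i => ((m1 i).comp measurable_fst).const_mul _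
    have M2 : ∀ i, Measurable fun z : A × A => R i * dd (g i z.2) (∫⁻ b, φ i b ∂(k' z.2)) :=
      fun i => ((m2 i).comp measurable_snd).const_mul _
    have M3 : Measurable fun z : A × A => ∫⁻ b, φ0 b * w b ∂(k z.1) := hk0.comp measurable_fst
    have M4 : Measurable fun z : A × A => ∫⁻ b, φ0 b * w b ∂(k' z.2) := hk0'.comp measurable_snd
    have S1 : Measurable fun z : A × A =>
        ∑ i ∈ Finset.range n, R i * dd (g i z.1) (∫⁻ b, φ i b ∂(k z.1)) :=
      Finset.measurable_fun_sum _ fun i _ => M1 i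
    have S2 : Measurable fun z : A × A =>
        ∑ i ∈ Finset.range n, R i * dd (g i z.2) (∫⁻ b, φ i b ∂(k' z.2)) :=
      Finset.measurable_fun_sum _ fun i _ => M2 i
    calc ∫⁻ z, H ((z.1, k z.1), z.2) ∂q
        ≤ ∫⁻ z, ((DA z.1 z.2 ^ p + ∑ i ∈ Finset.range n, R i * dd (g i z.1) (g i z.2)) + ε +
          ((∑ i ∈ Finset.range n, R i * dd (g i z.1) (∫⁻ b, φ i b ∂(k z.1))) +
            ∑ i ∈ Finset.range n, R i * dd (g i z.2) (∫⁻ b, φ i b ∂(k' z.2))) +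
          (∫⁻ b, φ0 b * w b ∂(k z.1) + ∫⁻ b, φ0 b * w b ∂(k' z.2))) ∂q := by
          refine lintegral_mono fun z => ?_
          simp only [hH]
          have hs : ∑ i ∈ Finset.range n, R i * dd (∫⁻ b, φ i b ∂(k z.1)) (∫⁻ b, φ i b ∂(k' z.2))
              ≤ ∑ i ∈ Finset.range n, R i * dd (g i z.1) (∫⁻ b, φ i b ∂(k z.1)) +
                ∑ i ∈ Finset.range n, R i * dd (g i z.1) (g i z.2) +
                ∑ i ∈ Finset.range n, R i * dd (g i z.2) (∫⁻ b, φ i b ∂(k' z.2)) := by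
            rw [← Finset.sum_add_distrib, ← Finset.sum_add_distrib]
            refine Finset.sum_le_sum fun i _ => ?_
            rw [← mul_add, ← mul_add]
            refine mul_le_mul_right ?_ _
            refine (dd_tri _ (g i z.2) _).trans (add_le_add ?_ le_rfl)
            refine (dd_tri _ (g i z.1) _).trans (add_le_add ?_ le_rfl)
            rw [dd_comm]
          calc _ ≤ DA z.1 z.2 ^ p + (ε + (∑ i ∈ Finset.range n, R i * dd (g i z.1) (∫⁻ b, φ i b ∂(k z.1)) +
                ∑ i ∈ Finset.range n, R i * dd (g i z.1) (g i z.2) +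
                ∑ i ∈ Finset.range n, R i * dd (g i z.2) (∫⁻ b, φ i b ∂(k' z.2))) +
                (∫⁻ b, φ0 b * w b ∂(k z.1) + ∫⁻ b, φ0 b * w b ∂(k' z.2))) := by gcongr
            _ = _ := by ring
      _ = _ := by
          have M5 : Measurable fun z : A × A =>
              ((DA z.1 z.2 ^ p + ∑ i ∈ Finset.range n, R i * dd (g i z.1) (g i z.2)) + ε +
              ((∑ i ∈ Finset.range n, R i * dd (g i z.1) (∫⁻ b, φ i b ∂(k z.1))) +
              ∑ i ∈ Finset.range n, R i * dd (g i z.2) (∫⁻ b, φ i b ∂(k' z.2)))) :=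
            (M0.add_const ε).add (S1.add S2)
          rw [lintegral_add_left M5, lintegral_add_left M3,
            lintegral_add_left (M0.add_const ε), lintegral_add_left S1, lintegral_add_left M0,
            lintegral_const, measure_univ, mul_one, hfst _ hk0, hsnd _ hk0',
            lintegral_finsetSum _ fun i _ => M1 i, lintegral_finsetSum _ fun i _ => M2 i]
          have q1 : ∀ i, ∫⁻ z : A × A, R i * dd (g i z.1) (∫⁻ b, φ i b ∂(k z.1)) ∂q =
              R i * ∫⁻ a, dd (g i a) (∫⁻ b, φ i b ∂(k a)) ∂μ := by
            intro i
            exact (lintegral_const_mul _ ((m1 i).comp measurable_fst)).trans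
              (congrArg (R i * ·) (hfst _ (m1 i)))
          have q2 : ∀ i, ∫⁻ z : A × A, R i * dd (g i z.2) (∫⁻ b, φ i b ∂(k' z.2)) ∂q =
              R i * ∫⁻ a, dd (g i a) (∫⁻ b, φ i b ∂(k' a)) ∂ν := by
            intro i
            exact (lintegral_const_mul _ ((m2 i).comp measurable_snd)).trans
              (congrArg (R i * ·) (hsnd _ (m2 i)))
          simp_rw [q1, q2]

theorem exists_approx {A : Type*} [TopologicalSpace A] [NormalSpace A] [MeasurableSpace A]
    [BorelSpace A] (μ : Measure A) [IsProbabilityMeasure μ] [μ.WeaklyRegular]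
    (Φ : A → ℝ) (hΦ : Measurable Φ)
    (h01 : ∀ a, 0 ≤ Φ a ∧ Φ a ≤ 1) (δ : ℝ≥0∞) (hδ : 0 < δ) :
    ∃ g : A → ℝ, Continuous g ∧ (∀ a, 0 ≤ g a ∧ g a ≤ 1) ∧
      ∫⁻ a, dd (ENNReal.ofReal (g a)) (ENNReal.ofReal (Φ a)) ∂μ ≤ δ := by
  have hintg : Integrable Φ μ := by
    refine (integrable_const (1 : ℝ)).mono' hΦ.aestronglyMeasurable
      (Eventually.of_forall fun x => ?_)
    rw [Real.norm_of_nonneg (h01 x).1]; exact (h01 x).2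
  obtain ⟨g, hg, -⟩ := hintg.exists_boundedContinuous_lintegral_sub_le hδ.ne'
  have hc01 : ∀ a, 0 ≤ max 0 (min 1 (g a)) ∧ max 0 (min 1 (g a)) ≤ 1 := fun a =>
    ⟨le_max_left _ _, max_le zero_le_one (min_le_left _ _)⟩
  refine ⟨fun a => max 0 (min 1 (g a)), by fun_prop, hc01, ?_⟩
  refine (lintegral_mono fun a => ?_).trans hg
  rw [dd_ofReal _ _ (hc01 a).1 (h01 a).1, Real.enorm_eq_ofReal_abs]
  refine ENNReal.ofReal_le_ofReal ?_
  have := h01 a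
  rw [abs_sub_comm (Φ a)]
  rcases le_total 0 (g a) with h0 | h0
  · rcases le_total 1 (g a) with h1 | h1
    · rw [min_eq_left h1, max_eq_right zero_le_one, abs_of_nonneg (by linarith),
        abs_of_nonneg (by linarith)]
      linarith
    · rw [min_eq_right h1, max_eq_right h0]
  · rw [min_eq_right (by linarith), max_eq_left h0, abs_of_nonpos (by linarith),
      abs_of_nonpos (by linarith)]
    linarith

section Final

variable {E : Type*} [MetricSpace E] [CompleteSpace E] [SecondCountableTopology E]
  [MeasurableSpace E] [BorelSpace E] [Nonempty E]

theorem cont_w (p : ℝ) (hp : 1 ≤ p) (N : ℕ) (hN : 0 < N) (ψ : (Fin N → E) → ℝ)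
    (hψ : Continuous ψ) (h01 : ∀ x, 0 ≤ ψ x ∧ ψ x ≤ 1) (w : (Fin N → E) → ℝ≥0∞)
    (hw : Continuous w) (x₀ : Fin N → E) (C : ℝ≥0∞) (hC : C ≠ ∞)
    (hwC : ∀ x, w x ≤ C * (1 + pathDist p edist x₀ x ^ p)) :
    Continuous[TopologicalSpace.induced Subtype.val (stopTopWp (Y := E) p edist N), _]
      (fun ν : {μ : Measure (Fin N → E) // MemPp p (pathDist p edist) μ} =>
        ∫⁻ x, ENNReal.ofReal (ψ x) * w x ∂ν.1) := by
  have hb : ∀ x : Fin N → E, 1 + pathDist p edist x₀ x ^ p ≠ ∞ := fun x =>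
    ENNReal.add_ne_top.2 ⟨one_ne_top, pathDist_rpow_ne_top p hp _ _⟩
  have hwt : ∀ x, w x ≠ ∞ := fun x =>
    ne_top_of_le_ne_top (ENNReal.mul_ne_top hC (hb x)) (hwC x)
  have hwc : Continuous fun x => (w x).toReal :=
    ENNReal.continuousOn_toReal.comp_continuous hw hwt
  have := cont_lintegral p hp N hN (fun x => ψ x * (w x).toReal) (hψ.mul hwc)
    (fun x => mul_nonneg (h01 x).1 ENNReal.toReal_nonneg) C.toReal x₀ (fun x => by
      calc ψ x * (w x).toReal ≤ 1 * (w x).toReal :=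
            mul_le_mul_of_nonneg_right (h01 x).2 ENNReal.toReal_nonneg
        _ = (w x).toReal := one_mul _
        _ ≤ (C * (1 + pathDist p edist x₀ x ^ p)).toReal :=
            ENNReal.toReal_mono (ENNReal.mul_ne_top hC (hb x)) (hwC x)
        _ = _ := by
            rw [ENNReal.toReal_mul, ENNReal.toReal_add one_ne_top (pathDist_rpow_ne_top p hp _ _),
              ENNReal.toReal_one])
  have e : ∀ x, ENNReal.ofReal (ψ x * (w x).toReal) = ENNReal.ofReal (ψ x) * w x := fun x => by
    rw [ENNReal.ofReal_mul (h01 x).1, ENNReal.ofReal_toReal (hwt x)]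
  simp_rw [e] at this
  exact this

end Final

/-! ### Part 7: neighbourhoods -/

theorem sum_small (n : ℕ) (R x : ℕ → ℝ≥0∞) (ε : ℝ≥0∞)
    (hx : ∀ i ∈ Finset.range n, x i ≤ ε / (1 + ∑ i ∈ Finset.range n, R i)) :
    ∑ i ∈ Finset.range n, R i * x i ≤ ε := by
  set S := ∑ i ∈ Finset.range n, R i with hS
  calc ∑ i ∈ Finset.range n, R i * x i ≤ ∑ i ∈ Finset.range n, R i * (ε / (1 + S)) :=
        Finset.sum_le_sum fun i hi => mul_le_mul_right (hx i hi) _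
    _ = S * (ε / (1 + S)) := by rw [← Finset.sum_mul]
    _ ≤ (1 + S) * (ε / (1 + S)) := mul_le_mul_left le_add_self _
    _ ≤ ε := ENNReal.mul_div_le

section Final2

variable {E : Type*} [MetricSpace E] [CompleteSpace E] [SecondCountableTopology E]
  [MeasurableSpace E] [BorelSpace E] [Nonempty E]

theorem infoMap_eq {N : ℕ} (t : ℕ) (h : t ≤ N) (ν : Measure (Fin N → E)) :
    infoMap N t h ν = (ν.map (restr t h)).map (fun a => (a, kap t h ν a)) := by
  have hm : Measurable fun a : Fin t → E => (a, kap t h ν a) :=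
    measurable_id.prodMk (kap t h ν).measurable
  rw [Measure.map_map hm (measurable_restr t h)]
  rfl

theorem main_event (p : ℝ) (hp : 1 ≤ p) {N : ℕ} (r : ℕ) (h : r + 1 ≤ N) (hr : r + 1 < N)
    (μ : {μ : Measure (Fin N → E) // MemPp p (pathDist p edist) μ})
    (ε : ℝ≥0∞) (hε : 0 < ε) :
    ∀ᶠ ν in @nhds _ (TopologicalSpace.induced Subtype.val (stopTopWp (Y := E) p edist N)) μ,
      ∀ c, Wp p (prodDist p (pathDist p edist) (Wp p (pathDist p edist))) c
          (infoMap N (r + 1) h ν.1) ≤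
        Wp p (prodDist p (pathDist p edist) (Wp p (pathDist p edist))) c
          (infoMap N (r + 1) h μ.1) + (9 * ε) ^ (1 / p) := by
  classical
  letI : TopologicalSpace {μ : Measure (Fin N → E) // MemPp p (pathDist p edist) μ} :=
    TopologicalSpace.induced Subtype.val (stopTopWp (Y := E) p edist N)
  have hN : 0 < N := by omega
  obtain ⟨x₀⟩ : Nonempty (Fin N → E) := inferInstance
  have hres := measurable_restr (E := E) (k := N) (r + 1) h
  have htl := measurable_tailr (E := E) (k := N) (r + 1) h
  have hcres := continuous_restr (E := E) (k := N) (r + 1) h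
  have hctl := continuous_tailr (E := E) (k := N) (r + 1) h
  haveI := μ.2.1
  haveI := kap_markov (r + 1) h μ.1
  haveI : IsProbabilityMeasure (μ.1.map (restr (r + 1) h)) :=
    Measure.isProbabilityMeasure_map hres.aemeasurable
  have h2 : (2 : ℝ≥0∞) ^ (p - 1) ≠ ∞ :=
    ENNReal.rpow_ne_top_of_nonneg (by linarith) (by simp)
  have hmom := moment_any p hp μ.2 x₀
  -- partition of the tail space
  set wB : (Fin (N - (r + 1)) → E) → ℝ≥0∞ :=
    fun y => 2 ^ (p - 1) * pathDist p edist (tailr (r + 1) h x₀) y ^ p with hwB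
  have hwBc : Continuous wB := ENNReal.continuous_const_mul h2 |>.comp
    ((pathDist_rpow_cont p hp).comp (Continuous.prodMk_right _))
  have hwBt : ∀ y, wB y ≠ ∞ := fun y => ENNReal.mul_ne_top h2 (pathDist_rpow_ne_top p hp _ _)
  have hwBle : ∀ x, wB (tailr (r + 1) h x) ≤ 2 ^ (p - 1) * (1 + pathDist p edist x₀ x ^ p) :=
    fun x => mul_le_mul_right ((pathDist_tailr_le p hp (r + 1) h x₀ x).trans le_add_self) _
  have hbase : ∀ C : ℝ≥0∞, C ≠ ∞ → ∫⁻ x, C * (1 + pathDist p edist x₀ x ^ p) ∂μ.1 ≠ ∞ := by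
    intro C hC
    rw [lintegral_const_mul' _ _ hC, lintegral_add_left measurable_const]
    refine ENNReal.mul_ne_top hC (ENNReal.add_ne_top.2 ⟨by simp, hmom⟩)
  have hwBm : ∫⁻ y, wB y ∂(μ.1.map (tailr (r + 1) h)) ≠ ∞ := by
    rw [lintegral_map hwBc.measurable htl]
    exact ne_top_of_le_ne_top (hbase _ h2) (lintegral_mono hwBle)
  obtain ⟨n, φ, φ0, R, hφc, hφ0c, hφ01, hφ001, hsum, hφε, hφR, hφ0s⟩ :=
    exists_partition (fun z : (Fin (N - (r + 1)) → E) × (Fin (N - (r + 1)) → E) =>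
      pathDist p edist z.1 z.2 ^ p) (pathDist_rpow_cont p hp)
      (fun x => pathDist_rpow_self p hp x) wB hwBc hwBt ε hε (μ.1.map (tailr (r + 1) h)) hwBm
  have hφ0w : Measurable fun y => ENNReal.ofReal (φ0 y) * wB y :=
    (ENNReal.continuous_ofReal.comp hφ0c).measurable.mul hwBc.measurable
  rw [lintegral_map hφ0w htl] at hφ0s
  set S : ℝ≥0∞ := ∑ i ∈ Finset.range n, (R i : ℝ≥0∞) with hS
  have hSt : S ≠ ∞ := ENNReal.sum_ne_top.2 fun i _ => ENNReal.coe_ne_top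
  have hδ : 0 < ε / (1 + S) :=
    ENNReal.div_pos hε.ne' (ENNReal.add_ne_top.2 ⟨one_ne_top, hSt⟩)
  obtain ⟨δ, hδ0, hδlt⟩ := exists_between hδ
  -- continuous approximation of the conditional expectations
  have hφint : ∀ i a, Integrable (φ i) (kap (r + 1) h μ.1 a) := by
    intro i a
    refine (integrable_const (1 : ℝ)).mono' (hφc i).measurable.aestronglyMeasurable
      (Eventually.of_forall fun x => ?_)
    rw [Real.norm_of_nonneg (hφ01 i x).1]; exact (hφ01 i x).2
  have happ : ∀ i, ∃ g : (Fin (r + 1) → E) → ℝ, Continuous g ∧ (∀ a, 0 ≤ g a ∧ g a ≤ 1) ∧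
      ∫⁻ a, dd (ENNReal.ofReal (g a)) (∫⁻ b, ENNReal.ofReal (φ i b) ∂(kap (r + 1) h μ.1 a))
        ∂(μ.1.map (restr (r + 1) h)) ≤ δ := by
    intro i
    have hm : Measurable fun a => ∫ b, φ i b ∂(kap (r + 1) h μ.1 a) :=
      (StronglyMeasurable.integral_kernel_prod_right'
        (f := fun z : (Fin (r + 1) → E) × (Fin (N - (r + 1)) → E) => φ i z.2)
        ((hφc i).measurable.comp measurable_snd).stronglyMeasurable).measurable
    obtain ⟨g, hgc, hg01, hg⟩ := exists_approx (μ.1.map (restr (r + 1) h)) _ hm (fun a =>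
      ⟨integral_nonneg fun b => (hφ01 i b).1, by
        calc ∫ b, φ i b ∂(kap (r + 1) h μ.1 a) ≤ ∫ _b, (1 : ℝ) ∂(kap (r + 1) h μ.1 a) :=
              integral_mono (hφint i a) (integrable_const _) fun b => (hφ01 i b).2
          _ = 1 := by simp⟩) δ hδ0
    refine ⟨g, hgc, hg01, ?_⟩
    refine (lintegral_mono fun a => ?_).trans hg
    rw [ofReal_integral_eq_lintegral_ofReal (hφint i a)
      (Eventually.of_forall fun b => (hφ01 i b).1)]
  choose g hgc hg01 hgδ using happ
  -- partition of the initial space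
  set cA : (Fin (r + 1) → E) × (Fin (r + 1) → E) → ℝ≥0∞ := fun z => pathDist p edist z.1 z.2 ^ p +
    ∑ i ∈ Finset.range n, (R i : ℝ≥0∞) *
      dd (ENNReal.ofReal (g i z.1)) (ENNReal.ofReal (g i z.2)) with hcA
  have hcAc : Continuous cA := by
    refine (pathDist_rpow_cont p hp).add (continuous_finsetSum _ fun i _ => ?_)
    refine (ENNReal.continuous_const_mul ENNReal.coe_ne_top).comp ?_
    have : ∀ z : (Fin (r + 1) → E) × (Fin (r + 1) → E),
        dd (ENNReal.ofReal (g i z.1)) (ENNReal.ofReal (g i z.2)) =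
          ENNReal.ofReal |g i z.1 - g i z.2| :=
      fun z => dd_ofReal _ _ (hg01 i _).1 (hg01 i _).1
    simp_rw [this]
    refine ENNReal.continuous_ofReal.comp ?_
    exact continuous_abs.comp
      (((hgc i).comp continuous_fst).sub ((hgc i).comp continuous_snd))
  have hcA0 : ∀ x, cA (x, x) = 0 := fun x => by
    simp only [hcA, dd_self, pathDist_rpow_self p hp, mul_zero, Finset.sum_const_zero, add_zero]
  set wA : (Fin (r + 1) → E) → ℝ≥0∞ :=
    fun y => 2 ^ (p - 1) * pathDist p edist (restr (r + 1) h x₀) y ^ p + S with hwA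
  have hwAc : Continuous wA := (ENNReal.continuous_const_mul h2 |>.comp
    ((pathDist_rpow_cont p hp).comp (Continuous.prodMk_right _))).add continuous_const
  have hwAt : ∀ y, wA y ≠ ∞ := fun y =>
    ENNReal.add_ne_top.2 ⟨ENNReal.mul_ne_top h2 (pathDist_rpow_ne_top p hp _ _), hSt⟩
  have hCA : (2 : ℝ≥0∞) ^ (p - 1) + S ≠ ∞ := ENNReal.add_ne_top.2 ⟨h2, hSt⟩
  have hwAle : ∀ x, wA (restr (r + 1) h x) ≤
      (2 ^ (p - 1) + S) * (1 + pathDist p edist x₀ x ^ p) := by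
    intro x
    rw [add_mul]
    refine add_le_add
      (mul_le_mul_right ((pathDist_restr_le p hp (r + 1) h x₀ x).trans le_add_self) _) ?_
    calc S = S * 1 := (mul_one S).symm
      _ ≤ _ := mul_le_mul_right le_self_add _
  have hwAm : ∫⁻ y, wA y ∂(μ.1.map (restr (r + 1) h)) ≠ ∞ := by
    rw [lintegral_map hwAc.measurable hres]
    exact ne_top_of_le_ne_top (hbase _ hCA) (lintegral_mono hwAle)
  have hcAw : ∀ x y, cA (x, y) ≤ wA x + wA y := by
    intro x y
    have e1 : ∑ i ∈ Finset.range n, (R i : ℝ≥0∞) *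
        dd (ENNReal.ofReal (g i x)) (ENNReal.ofReal (g i y)) ≤ S := by
      refine Finset.sum_le_sum fun i _ => ?_
      calc _ ≤ (R i : ℝ≥0∞) * 1 := by
            refine mul_le_mul_right ?_ _
            rw [dd_ofReal _ _ (hg01 i _).1 (hg01 i _).1, ← ENNReal.ofReal_one]
            refine ENNReal.ofReal_le_ofReal ?_
            rw [abs_le]
            have := hg01 i x
            have := hg01 i y
            constructor <;> linarith
        _ = _ := mul_one _
    calc cA (x, y) ≤ (2 ^ (p - 1) * pathDist p edist (restr (r + 1) h x₀) x ^ p +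
          2 ^ (p - 1) * pathDist p edist (restr (r + 1) h x₀) y ^ p) + S :=
          add_le_add (pathDist_rpow_le p hp _ x y) e1
      _ ≤ (2 ^ (p - 1) * pathDist p edist (restr (r + 1) h x₀) x ^ p +
          2 ^ (p - 1) * pathDist p edist (restr (r + 1) h x₀) y ^ p) + (S + S) :=
          add_le_add le_rfl le_self_add
      _ = _ := by simp only [hwA]; ring
  obtain ⟨m, ψ, ψ0, R', hψc, hψ0c, hψ01, hψ001, hψsum, hψε, hψR, hψ0s⟩ :=
    exists_partition cA hcAc hcA0 wA hwAc hwAt ε hε (μ.1.map (restr (r + 1) h)) hwAm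
  have hψ0w : Measurable fun y => ENNReal.ofReal (ψ0 y) * wA y :=
    (ENNReal.continuous_ofReal.comp hψ0c).measurable.mul hwAc.measurable
  have hψm : ∀ j, Measurable fun y => ENNReal.ofReal (ψ j y) := fun j =>
    (ENNReal.continuous_ofReal.comp (hψc j)).measurable
  have hφm : ∀ j, Measurable fun y => ENNReal.ofReal (φ j y) := fun j =>
    (ENNReal.continuous_ofReal.comp (hφc j)).measurable
  rw [lintegral_map hψ0w hres] at hψ0s
  set S' : ℝ≥0∞ := ∑ i ∈ Finset.range m, (R' i : ℝ≥0∞) with hS'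
  have hSt' : S' ≠ ∞ := ENNReal.sum_ne_top.2 fun i _ => ENNReal.coe_ne_top
  have hδ' : 0 < ε / (1 + S') :=
    ENNReal.div_pos hε.ne' (ENNReal.add_ne_top.2 ⟨one_ne_top, hSt'⟩)
  have ev1 : ∀ᶠ ν in 𝓝 μ, ∫⁻ x, ENNReal.ofReal (ψ0 (restr (r + 1) h x)) *
      wA (restr (r + 1) h x) ∂ν.1 < ε :=
    (cont_w p hp N hN _ (hψ0c.comp hcres) (fun x => hψ001 _) _ (hwAc.comp hcres) x₀ _ hCA
      hwAle).continuousAt.eventually_lt continuousAt_const hψ0s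
  have ev2 : ∀ᶠ ν in 𝓝 μ, ∫⁻ x, ENNReal.ofReal (φ0 (tailr (r + 1) h x)) *
      wB (tailr (r + 1) h x) ∂ν.1 < ε :=
    (cont_w p hp N hN _ (hφ0c.comp hctl) (fun x => hφ001 _) _ (hwBc.comp hctl) x₀ _ h2
      hwBle).continuousAt.eventually_lt continuousAt_const hφ0s
  have ev3 : ∀ᶠ ν in 𝓝 μ, ∀ i ∈ Finset.range n,
      ∫⁻ a, dd (ENNReal.ofReal (g i a)) (∫⁻ b, ENNReal.ofReal (φ i b) ∂(kap (r + 1) h ν.1 a))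
        ∂(ν.1.map (restr (r + 1) h)) < ε / (1 + S) := by
    refine (Finset.eventually_all _).2 fun i _ => ?_
    exact (cont_dd p hp r h hr (g i) (hgc i) (hg01 i) (φ i) (hφc i)
      (hφ01 i)).continuousAt.eventually_lt continuousAt_const ((hgδ i).trans_lt hδlt)
  have ev4 : ∀ᶠ ν in 𝓝 μ, ∀ j ∈ Finset.range m,
      dd (∫⁻ x, ENNReal.ofReal (ψ j (restr (r + 1) h x)) ∂μ.1)
        (∫⁻ x, ENNReal.ofReal (ψ j (restr (r + 1) h x)) ∂ν.1) < ε / (1 + S') := by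
    refine (Finset.eventually_all _).2 fun j _ => ?_
    have hfin : ∫⁻ x, ENNReal.ofReal (ψ j (restr (r + 1) h x)) ∂μ.1 ≠ ∞ := by
      refine ne_top_of_le_ne_top one_ne_top ?_
      calc _ ≤ ∫⁻ _x, 1 ∂μ.1 := lintegral_mono fun x => ENNReal.ofReal_le_one.2 (hψ01 j _).2
        _ = 1 := by simp
    have c1 := cont_w p hp N hN _ ((hψc j).comp hcres) (fun x => hψ01 j _) (fun _ => 1)
      continuous_const x₀ 1 one_ne_top (fun x => by rw [one_mul]; exact le_self_add)
    simp only [mul_one] at c1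
    refine ((dd_cont _ hfin).comp c1).continuousAt.eventually_lt continuousAt_const ?_
    simp only [Function.comp]
    rw [dd_self]
    exact hδ'
  filter_upwards [ev1, ev2, ev3, ev4] with ν v1 v2 v3 v4
  intro c
  haveI := ν.2.1
  haveI := kap_markov (r + 1) h ν.1
  haveI : IsProbabilityMeasure (ν.1.map (restr (r + 1) h)) :=
    Measure.isProbabilityMeasure_map hres.aemeasurable
  obtain ⟨q, hq, hqle⟩ := exists_coupling (μ.1.map (restr (r + 1) h)) (ν.1.map (restr (r + 1) h))
    m (fun j y => ENNReal.ofReal (ψ j y)) (fun y => ENNReal.ofReal (ψ0 y)) hψm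
    (ENNReal.continuous_ofReal.comp hψ0c).measurable hψsum
    (fun j y => ENNReal.ofReal_le_one.2 (hψ01 j y).2) cA hcAc.measurable wA hwAc.measurable hcAw
    ε (fun j => (R' j : ℝ≥0∞)) hψε hψR
  rw [infoMap_eq, infoMap_eq]
  refine (inner_bound p hp (pathDist p edist) (pathDist p edist) (pathDist_cont p).measurable
    (pathDist_cont p).measurable (pathDist_tri p hp) (pathDist_tri p hp)
    (μ.1.map (restr (r + 1) h)) (ν.1.map (restr (r + 1) h)) (kap (r + 1) h μ.1)
    (kap (r + 1) h ν.1) q hq n (fun j y => ENNReal.ofReal (φ j y)) (fun y => ENNReal.ofReal (φ0 y))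
    hφm (ENNReal.continuous_ofReal.comp hφ0c).measurable hsum
    (fun j y => ENNReal.ofReal_le_one.2 (hφ01 j y).2) wB hwBc.measurable
    (pathDist_rpow_le p hp _) ε (fun j => (R j : ℝ≥0∞)) hφε hφR
    (fun i a => ENNReal.ofReal (g i a))
    (fun i => (ENNReal.continuous_ofReal.comp (hgc i)).measurable) c).trans ?_
  refine add_le_add le_rfl (ENNReal.rpow_le_rpow ?_ (by positivity))
  have b0 : ∫⁻ z, cA z ∂q ≤ ε + ε + (ε + ε) := by
    refine hqle.trans (add_le_add (add_le_add le_rfl ?_) (add_le_add ?_ ?_))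
    · refine sum_small m _ _ ε fun j hj => ?_
      rw [lintegral_map (hψm j) hres, lintegral_map (hψm j) hres]
      exact (v4 j hj).le
    · rw [lintegral_map hψ0w hres]; exact hψ0s.le
    · rw [lintegral_map hψ0w hres]; exact v1.le
  have b1 : ∑ i ∈ Finset.range n, (R i : ℝ≥0∞) * ∫⁻ a, dd (ENNReal.ofReal (g i a))
      (∫⁻ b, ENNReal.ofReal (φ i b) ∂(kap (r + 1) h μ.1 a)) ∂(μ.1.map (restr (r + 1) h)) ≤ ε :=
    sum_small n (fun i => (R i : ℝ≥0∞)) _ ε fun i _ => (hgδ i).trans hδlt.le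
  have b2 : ∑ i ∈ Finset.range n, (R i : ℝ≥0∞) * ∫⁻ a, dd (ENNReal.ofReal (g i a))
      (∫⁻ b, ENNReal.ofReal (φ i b) ∂(kap (r + 1) h ν.1 a)) ∂(ν.1.map (restr (r + 1) h)) ≤ ε :=
    sum_small n (fun i => (R i : ℝ≥0∞)) _ ε fun i hi => (v3 i hi).le
  have b3 : ∫⁻ a, ∫⁻ b, ENNReal.ofReal (φ0 b) * wB b ∂(kap (r + 1) h μ.1 a)
      ∂(μ.1.map (restr (r + 1) h)) ≤ ε := by
    rw [kap_lintegral (r + 1) h μ.1 _ hφ0w]; exact hφ0s.le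
  have b4 : ∫⁻ a, ∫⁻ b, ENNReal.ofReal (φ0 b) * wB b ∂(kap (r + 1) h ν.1 a)
      ∂(ν.1.map (restr (r + 1) h)) ≤ ε := by
    rw [kap_lintegral (r + 1) h ν.1 _ hφ0w]; exact v2.le
  calc _ ≤ (ε + ε + (ε + ε)) + ε + (ε + ε) + (ε + ε) :=
        add_le_add (add_le_add (add_le_add b0 le_rfl) (add_le_add b1 b2)) (add_le_add b3 b4)
    _ = 9 * ε := by ring

end Final2

/-- **Lemma 6.5.**  The `𝒲_p`-optimal stopping topology is finer than the
`𝒲_p`-information topology: every information-open set is stopping-open. -/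
theorem stopping_finer_than_information
    {X : Type} [MetricSpace X] [CompleteSpace X] [SecondCountableTopology X]
    [MeasurableSpace X] [BorelSpace X] [Nonempty X]
    (p : ℝ) (hp : 1 ≤ p) (N : ℕ) (hN : 0 < N) :
    let d : X → X → ℝ≥0∞ := edist
    let P := {μ : Measure (Fin N → X) // MemPp p (pathDist p d) μ}
    ∀ U : Set P,
      @IsOpen P (TopologicalSpace.induced Subtype.val (infoTopWp (Y := X) p d N)) U →
      @IsOpen P (TopologicalSpace.induced Subtype.val (stopTopWp (Y := X) p d N)) U := by
  intro d P U hU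
  suffices hle : TopologicalSpace.induced (Subtype.val : P → _) (stopTopWp (Y := X) p d N) ≤
      TopologicalSpace.induced (Subtype.val : P → _) (infoTopWp (Y := X) p d N) from hle U hU
  unfold infoTopWp
  simp only [induced_iInf, le_iInf_iff, induced_compose]
  intro t ht1 ht
  obtain ⟨r, rfl⟩ : ∃ r, t = r + 1 := ⟨t - 1, by omega⟩
  have hr : r + 1 < N := by omega
  rw [← continuous_iff_le_induced]
  unfold ballTop
  refine continuous_generateFrom_iff.2 ?_
  rintro _ ⟨c, e, he, rfl⟩
  letI : TopologicalSpace P := TopologicalSpace.induced Subtype.val (stopTopWp (Y := X) p d N)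
  refine isOpen_iff_mem_nhds.2 fun μ hμ => ?_
  have hμ' : Wp p (prodDist p (pathDist p d) (Wp p (pathDist p d))) c
      (infoMap N (r + 1) hr.le μ.1) < e := hμ
  obtain ⟨η, hη0, hη⟩ : ∃ η : ℝ≥0∞, 0 < η ∧ Wp p (prodDist p (pathDist p d) (Wp p (pathDist p d))) c
      (infoMap N (r + 1) hr.le μ.1) + η < e := by
    obtain ⟨s, hs1, hs2⟩ := exists_between hμ'
    refine ⟨s - Wp p (prodDist p (pathDist p d) (Wp p (pathDist p d))) c
      (infoMap N (r + 1) hr.le μ.1), tsub_pos_of_lt hs1, ?_⟩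
    rwa [add_tsub_cancel_of_le hs1.le]
  have hp0 : 0 < p := by linarith
  have hε : 0 < η ^ p / 9 := ENNReal.div_pos (ENNReal.rpow_pos_of_nonneg hη0 hp0.le).ne' (by simp)
  have hev := main_event (E := X) p hp r hr.le hr μ (η ^ p / 9) hε
  have h9 : (9 * (η ^ p / 9)) ^ (1 / p) = η := by
    rw [ENNReal.mul_div_cancel (by simp) (by simp), ← ENNReal.rpow_mul, one_div,
      mul_inv_cancel₀ hp0.ne', ENNReal.rpow_one]
  rw [h9] at hev
  filter_upwards [hev] with ν hν
  exact (hν c).trans_lt hη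

end AWPaper
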